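/- Fix δ ∈ (0,1). Then there exist η > 0 and C > 0 such that for all P ≥ 2 and all R with 1 ≤ R ≤ P^η one has ∫_𝔐 |f_δ(α;P)|²·|g_δ(α;P,R)|⁶ dα ≤ C·P⁴. -/

import Mathlib

open MeasureTheory
open scoped Classical

/-- `e(α) = exp(2πiα)`. -/
noncomputable def eC (α : ℝ) : ℂ := Complex.exp (2 * Real.pi * Complex.I * α)

/-- An integer is `R`-smooth if all of its prime divisors are at most `R`. -/
def IsSmooth (R : ℝ) (x : ℤ) : Prop := ∀ p : ℕ, p.Prime → (p : ℤ) ∣ x → (p : ℝ) ≤ R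

/-- The smooth quartic Weyl sum `g_δ(α; P, R) = ∑_{x ∈ 𝒜(P,R), δP < x ≤ P} e(αx⁴)`. -/
noncomputable def gW (δ P R α : ℝ) : ℂ :=
  ∑ x ∈ Finset.Icc (⌊δ * P⌋ + 1) ⌊P⌋,
    if IsSmooth R x then eC (α * (x : ℝ) ^ 4) else 0

/-- The classical quartic Weyl sum `f_δ(α; P) = ∑_{δP < x ≤ P} e(αx⁴)`. -/
noncomputable def fW (δ P α : ℝ) : ℂ :=
  ∑ x ∈ Finset.Icc (⌊δ * P⌋ + 1) ⌊P⌋, eC (α * (x : ℝ) ^ 4)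

/-- The major arcs `𝔐`: the union of `{α ∈ [0,1) : |qα − a| ≤ P^{−7/2}}` over coprime
`a, q` with `0 ≤ a ≤ q ≤ P^{1/2}`. -/
def MajM (P : ℝ) : Set ℝ :=
  {α ∈ Set.Ico (0 : ℝ) 1 | ∃ a q : ℕ, a ≤ q ∧ (q : ℝ) ≤ P ^ ((1 : ℝ) / 2) ∧
    Nat.Coprime a q ∧ |(q : ℝ) * α - (a : ℝ)| ≤ P ^ (-(7 : ℝ) / 2)}

/-- `Ψ_𝔪(n) = ∫_𝔪 |f(α)|²|g(α)|⁶ e(−nα) dα`, where `𝔪 = [0,1) ∖ 𝔐`. -/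
noncomputable def PsiMinor (δ P R : ℝ) (n : ℤ) : ℂ :=
  ∫ α in Set.Ico (0 : ℝ) 1 \ MajM P,
    ((‖fW δ P α‖ ^ 2 * ‖gW δ P R α‖ ^ 6 : ℝ) : ℂ) * eC (-((n : ℝ) * α))

/-!
Near a rational `r` of small denominator, `f_δ(r + β)` is `S(r) v(β)` up to a small error,
where `S` is the normalised complete quartic sum and `v` an oscillatory integral. Integrating
over `β` reduces the claim to the bound `∑_r |S(r)|² |G(r)|⁶ ≪ N⁶` for Weyl sums `G` of length
`N` with bounded coefficients, where `r` runs over the rationals in `[0, 1]` whose denominator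
has square at most `N`.

Where `|G(r)|` is at most `N` times a small negative power of the denominator `q` of `r`, two
of the six factors `G` are bounded by this, and Parseval's identity bounds the fourth moment of
`G` over the fractions with denominator `q` by `N⁴` up to `q^ε` and a divisor function. What is
left is a sum over `q` of a multiplicative majorant of `|S|²`, which converges.

The remaining `r` are large values of `G`. By duality, with a Fejér weight that turns the
kernel into `S(r - s)`, each dyadic range of denominators contains so few of them that the
decay of `S` suffices.
-/

/-! ### Parseval's identity and complete power sums over a finite ring -/

section CharacterSums

variable {R : Type*} [CommRing R] [Fintype R] {ψ : AddChar R ℂ} {ι : Type*}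

lemma sum_norm_sq_sum_mul_addChar (hψ : ψ.IsPrimitive) (s : Finset ι) (φ : ι → R) (c : ι → ℂ) :
    ((∑ a, ‖∑ i ∈ s, c i * ψ (a * φ i)‖ ^ 2 : ℝ) : ℂ) = Fintype.card R *
      ∑ i ∈ s, ∑ j ∈ s, if φ i = φ j then c i * starRingEnd ℂ (c j) else 0 := by
  have expand (a : R) : (‖∑ i ∈ s, c i * ψ (a * φ i)‖ : ℂ) ^ 2 =
      ∑ i ∈ s, ∑ j ∈ s, c i * starRingEnd ℂ (c j) * ψ (a * (φ i - φ j)) := by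
    rw [← Complex.mul_conj', map_sum, Finset.sum_mul_sum]
    refine Finset.sum_congr rfl fun i _ => Finset.sum_congr rfl fun j _ => ?_
    rw [map_mul (starRingEnd ℂ), ← AddChar.map_neg_eq_conj, mul_sub, sub_eq_add_neg,
      AddChar.map_add_eq_mul]
    ring
  push_cast
  simp_rw [expand]
  rw [Finset.sum_comm, Finset.mul_sum]
  refine Finset.sum_congr rfl fun i _ => ?_
  rw [Finset.sum_comm, Finset.mul_sum]
  refine Finset.sum_congr rfl fun j _ => ?_
  rw [← Finset.mul_sum, AddChar.sum_mulShift _ hψ]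
  by_cases h : φ i = φ j
  · simp [h, mul_comm]
  · simp [h, sub_eq_zero]

lemma sum_norm_sq_sum_addChar (hψ : ψ.IsPrimitive) (s : Finset ι) (φ : ι → R) :
    ∑ a, ‖∑ i ∈ s, ψ (a * φ i)‖ ^ 2 =
      Fintype.card R * ∑ i ∈ s, ∑ j ∈ s, if φ i = φ j then (1 : ℝ) else 0 := by
  have h := sum_norm_sq_sum_mul_addChar hψ s φ fun _ => 1
  simp only [one_mul, map_one] at h
  apply Complex.ofReal_injective
  simpa only [Complex.ofReal_mul, Complex.ofReal_natCast, Complex.ofReal_sum,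
    apply_ite Complex.ofReal, Complex.ofReal_one, Complex.ofReal_zero] using h

lemma sum_norm_sq_sum_mul_addChar_le (hψ : ψ.IsPrimitive) (s : Finset ι) (φ : ι → R)
    {c : ι → ℂ} (hc : ∀ i ∈ s, ‖c i‖ ≤ 1) :
    ∑ a, ‖∑ i ∈ s, c i * ψ (a * φ i)‖ ^ 2 ≤ ∑ a, ‖∑ i ∈ s, ψ (a * φ i)‖ ^ 2 := by
  rw [sum_norm_sq_sum_addChar hψ, ← Real.norm_of_nonneg (r := ∑ a, _) (by positivity),
    ← Complex.norm_real, sum_norm_sq_sum_mul_addChar hψ, norm_mul, Complex.norm_natCast]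
  gcongr
  refine norm_sum_le_of_le _ fun i hi => norm_sum_le_of_le _ fun j hj => ?_
  split_ifs
  · rw [norm_mul, RCLike.norm_conj]
    exact mul_le_one₀ (hc i hi) (norm_nonneg _) (hc j hj)
  · simp

lemma sum_norm_pow_sum_mul_addChar_le (hψ : ψ.IsPrimitive) (k : ℕ) (s : Finset ι) (φ : ι → R)
    {c : ι → ℂ} (hc : ∀ i ∈ s, ‖c i‖ ≤ 1) :
    ∑ a, ‖∑ i ∈ s, c i * ψ (a * φ i)‖ ^ (2 * k) ≤ ∑ a, ‖∑ i ∈ s, ψ (a * φ i)‖ ^ (2 * k) := by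
  have map_sum (f : Fin k → R) (a : R) : ∏ j, ψ (a * f j) = ψ (a * ∑ j, f j) := by
    rw [Finset.mul_sum]
    exact (map_prod ψ.toMonoidHom (fun j => Multiplicative.ofAdd (a * f j)) Finset.univ).symm
  simp only [mul_comm 2 k, pow_mul, ← norm_pow _ k, Finset.sum_pow' s _ k,
    Finset.prod_mul_distrib, map_sum]
  refine sum_norm_sq_sum_mul_addChar_le hψ _ (fun p : Fin k → ι => ∑ j, φ (p j)) fun p hp => ?_
  rw [norm_prod]
  exact Finset.prod_le_one (fun _ _ => norm_nonneg _) fun j _ => hc _ (Fintype.mem_piFinset.1 hp j)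

/-- The complete sum `∑_y ψ(a yⁿ)` of the character `ψ` over the values of a monomial. -/
noncomputable def powerCharSum (ψ : AddChar R ℂ) (n : ℕ) (a : R) : ℂ :=
  ∑ y, ψ (a * y ^ n)

/-- The number of pairs of elements of a finite ring with equal `n`-th powers: the second moment of
the fibres of `y ↦ yⁿ`. -/
noncomputable def powerCollisions (n : ℕ) (R : Type*) [Monoid R] : ℕ :=
  Nat.card {p : R × R // p.1 ^ n = p.2 ^ n}

lemma sum_norm_powerCharSum_sq (hψ : ψ.IsPrimitive) (n : ℕ) :
    ∑ a, ‖powerCharSum ψ n a‖ ^ 2 = Fintype.card R * powerCollisions n R := by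
  simp only [powerCharSum, sum_norm_sq_sum_addChar hψ, powerCollisions, Nat.card_eq_fintype_card,
    Fintype.card_subtype, ← Finset.sum_boole, ← Finset.univ_product_univ, Finset.sum_product]

lemma powerCharSum_mul_pow_units (n : ℕ) (a : R) (u : Rˣ) :
    powerCharSum ψ n (a * u ^ n) = powerCharSum ψ n a :=
  Fintype.sum_equiv (Units.mulLeft u) _ _ fun y => by
    simp only [Units.mulLeft_apply, mul_pow, mul_assoc]

lemma card_units_mul_pow_eq_le (n : ℕ) (a : Rˣ) (b : R) :
    (Finset.univ.filter fun u : Rˣ => (a * u ^ n : R) = b).card ≤ Nat.card (rootsOfUnity n R) := by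
  rcases (Finset.univ.filter fun u : Rˣ => (a * u ^ n : R) = b).eq_empty_or_nonempty with
    h | ⟨v, hv⟩
  · simp [h]
  have eq_mul : (a * v ^ n : R) = b := (Finset.mem_filter.1 hv).2
  rw [← Fintype.card_subtype, ← Nat.card_eq_fintype_card]
  refine Nat.card_le_card_of_injective (fun u => ⟨u * v⁻¹, ?_⟩) fun u w h => ?_
  · have pow_eq : (u : Rˣ) ^ n = v ^ n :=
      mul_left_cancel (a := a) (Units.ext (by push_cast; rw [u.2, eq_mul]))
    rw [mem_rootsOfUnity, mul_pow, pow_eq, ← mul_pow, mul_inv_cancel, one_pow]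
  · simpa [Subtype.ext_iff] using h

/-- Averaging the invariance `a ↦ a uⁿ` over all units `u` trades a pointwise bound for the second
moment. -/
lemma card_units_mul_norm_powerCharSum_sq_le (hψ : ψ.IsPrimitive) (n : ℕ) (a : Rˣ) :
    Fintype.card Rˣ * ‖powerCharSum ψ n a‖ ^ 2 ≤
      Nat.card (rootsOfUnity n R) * (Fintype.card R * powerCollisions n R : ℝ) := by
  have average : Fintype.card Rˣ * ‖powerCharSum ψ n a‖ ^ 2 =
      ∑ u : Rˣ, ‖powerCharSum ψ n (a * u ^ n)‖ ^ 2 := by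
    simp [powerCharSum_mul_pow_units]
  rw [average, ← sum_norm_powerCharSum_sq hψ, Finset.mul_sum,
    ← Finset.sum_fiberwise Finset.univ fun u : Rˣ => (a * u ^ n : R)]
  refine Finset.sum_le_sum fun b _ => ?_
  rw [Finset.sum_congr rfl fun u hu => by rw [(Finset.mem_filter.1 hu).2], Finset.sum_const,
    nsmul_eq_mul]
  gcongr
  exact card_units_mul_pow_eq_le n a b

end CharacterSums

/-! ### Roots of unity in `ℤ/pᵏℤ` -/

section RootsOfUnity

/-- A cyclic subgroup `K` contains at most `n` solutions of `gⁿ = 1`, and so does each of its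
cosets. -/
lemma card_ker_powMonoidHom_le_mul_index {G : Type*} [CommGroup G] [Finite G] (K : Subgroup G)
    [IsCyclic K] {n : ℕ} (hn : 0 < n) :
    Nat.card (powMonoidHom n : G →* G).ker ≤ n * K.index := by
  set H := (powMonoidHom n : G →* G).ker
  have : Fintype K := Fintype.ofFinite K
  have inf_le : Nat.card (K ⊓ H : Subgroup G) ≤ n := by
    refine le_trans ?_ (IsCyclic.card_pow_eq_one_le (α := K) hn)
    rw [← Fintype.card_subtype, ← Nat.card_eq_fintype_card]
    exact Nat.card_le_card_of_injective (fun g => ⟨⟨g, g.2.1⟩, Subtype.ext g.2.2⟩)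
      fun g h hgh => Subtype.ext (congrArg (fun z => ((z : K) : G)) (Subtype.ext_iff.1 hgh))
  calc Nat.card H = Nat.card (K ⊓ H : Subgroup G) * K.relIndex H := by
        rw [← Subgroup.relIndex_bot_left, ← Subgroup.relIndex_bot_left,
          ← Subgroup.inf_relIndex_right K H,
          Subgroup.relIndex_mul_relIndex _ _ _ bot_le inf_le_right]
    _ ≤ n * K.index := Nat.mul_le_mul inf_le <|
        Nat.le_of_dvd (Nat.pos_of_ne_zero Subgroup.index_ne_zero_of_finite)
          (Subgroup.relIndex_dvd_index_of_normal K H)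

lemma card_rootsOfUnity_zmod_two_pow_le {n : ℕ} (hn : 0 < n) (k : ℕ) :
    Nat.card (rootsOfUnity n (ZMod (2 ^ k))) ≤ 2 * n := by
  obtain hk | ⟨k, rfl⟩ : k < 2 ∨ ∃ m, k = m + 2 := by
    rcases lt_or_ge k 2 with h | h
    exacts [.inl h, .inr ⟨k - 2, by omega⟩]
  · have : Subsingleton (ZMod (2 ^ k))ˣ := by
      interval_cases k <;> exact Fintype.card_le_one_iff_subsingleton.1 (by decide)
    exact (Finite.card_le_one_iff_subsingleton.2 inferInstance).trans (by omega)
  obtain ⟨u, hu⟩ : IsUnit (5 : ZMod (2 ^ (k + 2))) := by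
    rw [← orderOf_pos_iff.trans isOfFinOrder_iff_isUnit, ZMod.orderOf_five]; positivity
  have index_eq : (Subgroup.zpowers u).index = 2 := by
    have h := (Subgroup.zpowers u).card_mul_index
    rw [Nat.card_zpowers, ← orderOf_units, hu, ZMod.orderOf_five, Nat.card_eq_fintype_card,
      ZMod.card_units_eq_totient, Nat.totient_prime_pow_succ Nat.prime_two] at h
    simpa [pow_succ] using h
  calc _ ≤ n * (Subgroup.zpowers u).index := card_ker_powMonoidHom_le_mul_index _ hn
    _ = 2 * n := by rw [index_eq, mul_comm]

lemma card_rootsOfUnity_zmod_prime_pow_le {n : ℕ} (hn : 0 < n) {p : ℕ} (hp : p.Prime) (k : ℕ) :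
    Nat.card (rootsOfUnity n (ZMod (p ^ k))) ≤ 2 * n := by
  obtain rfl | hp2 := eq_or_ne p 2
  · exact card_rootsOfUnity_zmod_two_pow_le hn k
  have : NeZero (p ^ k) := ⟨pow_ne_zero _ hp.ne_zero⟩
  have : IsCyclic (ZMod (p ^ k))ˣ := ZMod.isCyclic_units_of_prime_pow p hp hp2 k
  calc _ ≤ n * (⊤ : Subgroup (ZMod (p ^ k))ˣ).index := card_ker_powMonoidHom_le_mul_index _ hn
    _ ≤ 2 * n := by rw [Subgroup.index_top]; omega

end RootsOfUnity

/-! ### Pairs of residues with equal powers -/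

section Collisions

lemma powerCollisions_congr (n : ℕ) {A B : Type*} [Monoid A] [Monoid B] (e : A ≃* B) :
    powerCollisions n A = powerCollisions n B :=
  Nat.card_congr <| (Equiv.prodCongr e.toEquiv e.toEquiv).subtypeEquiv fun p => by
    simp [← map_pow]

lemma powerCollisions_prod (n : ℕ) (A B : Type*) [Monoid A] [Monoid B] :
    powerCollisions n (A × B) = powerCollisions n A * powerCollisions n B := by
  rw [powerCollisions, powerCollisions, powerCollisions, ← Nat.card_prod]
  exact Nat.card_congr
    { toFun := fun p =>
        (⟨(p.1.1.1, p.1.2.1), congrArg Prod.fst p.2⟩, ⟨(p.1.1.2, p.1.2.2), congrArg Prod.snd p.2⟩)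
      invFun := fun z => ⟨((z.1.1.1, z.2.1.1), (z.1.1.2, z.2.1.2)), Prod.ext z.1.2 z.2.2⟩ }

lemma card_rootsOfUnity_prod (n : ℕ) (A B : Type*) [CommMonoid A] [CommMonoid B] :
    Nat.card (rootsOfUnity n (A × B)) =
      Nat.card (rootsOfUnity n A) * Nat.card (rootsOfUnity n B) := by
  rw [← Nat.card_prod]
  exact Nat.card_congr
    { toFun := fun ζ =>
        (⟨(MulEquiv.prodUnits ζ.1).1, by
            rw [mem_rootsOfUnity, ← Prod.pow_fst, ← map_pow, ζ.2]; rfl⟩,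
          ⟨(MulEquiv.prodUnits ζ.1).2, by
            rw [mem_rootsOfUnity, ← Prod.pow_snd, ← map_pow, ζ.2]; rfl⟩)
      invFun := fun z => ⟨MulEquiv.prodUnits.symm (z.1.1, z.2.1), by
        rw [mem_rootsOfUnity, ← map_pow, Prod.pow_mk, z.1.2, z.2.2]; exact map_one _⟩ }

lemma powerCollisions_of_subsingleton (n : ℕ) (A : Type*) [Monoid A] [Subsingleton A] :
    powerCollisions n A = 1 :=
  Nat.card_eq_one_iff_unique.2 ⟨inferInstance, ⟨⟨(1, 1), rfl⟩⟩⟩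

lemma powerCollisions_eq_add (n : ℕ) (A : Type*) [Monoid A] [Finite A] :
    powerCollisions n A = Nat.card {p : A × A // p.1 ^ n = p.2 ^ n ∧ IsUnit p.1} +
      Nat.card {p : A × A // p.1 ^ n = p.2 ^ n ∧ ¬IsUnit p.1} := by
  have : Fintype A := Fintype.ofFinite A
  simp only [powerCollisions, Nat.card_eq_fintype_card, Fintype.card_subtype]
  rw [← Finset.card_filter_add_card_filter_not fun p : A × A => IsUnit p.1, Finset.filter_filter,
    Finset.filter_filter]

lemma isUnit_iff_of_pow_eq {A : Type*} [CommMonoid A] {n : ℕ} (hn : n ≠ 0) {x y : A}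
    (h : x ^ n = y ^ n) : IsUnit x ↔ IsUnit y := by
  rw [← isUnit_pow_iff hn, h, isUnit_pow_iff hn]

/-- The ratio of two units with equal powers is a root of unity. -/
lemma card_isUnit_collisions_le {n : ℕ} (hn : n ≠ 0) (A : Type*) [CommMonoid A] [Finite A] :
    Nat.card {p : A × A // p.1 ^ n = p.2 ^ n ∧ IsUnit p.1} ≤
      Nat.card Aˣ * Nat.card (rootsOfUnity n A) := by
  have isUnit_snd (p : {p : A × A // p.1 ^ n = p.2 ^ n ∧ IsUnit p.1}) : IsUnit p.1.2 :=
    (isUnit_iff_of_pow_eq hn p.2.1).1 p.2.2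
  rw [← Nat.card_prod]
  refine Nat.card_le_card_of_injective
    (fun p => ((isUnit_snd p).unit, ⟨p.2.2.unit / (isUnit_snd p).unit, ?_⟩)) fun p r h => ?_
  · rw [mem_rootsOfUnity, div_pow, div_eq_one]
    exact Units.ext (by simpa using p.2.1)
  · obtain ⟨h₂, h₁⟩ := Prod.ext_iff.1 h
    have h₁ := Subtype.ext_iff.1 h₁
    dsimp only at h₁ h₂
    rw [h₂, div_left_inj] at h₁
    exact Subtype.ext (Prod.ext (by simpa using congrArg Units.val h₁)
      (by simpa using congrArg Units.val h₂))

section PrimePower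

variable {p : ℕ} (hp : p.Prime)
include hp

lemma dvd_val_of_not_isUnit {k : ℕ} {x : ZMod (p ^ k)} (hx : ¬IsUnit x) : p ∣ x.val := by
  have : NeZero (p ^ k) := ⟨pow_ne_zero _ hp.ne_zero⟩
  rw [← ZMod.natCast_zmod_val x, ZMod.isUnit_iff_coprime] at hx
  by_contra h
  exact hx (((hp.coprime_iff_not_dvd.2 h).symm).pow_right k)

lemma val_div_lt (k : ℕ) (x : ZMod (p ^ (k + 1))) : x.val / p < p ^ k :=
  have : NeZero (p ^ (k + 1)) := ⟨pow_ne_zero _ hp.ne_zero⟩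
  Nat.div_lt_of_lt_mul (pow_succ' p k ▸ ZMod.val_lt x)

lemma eq_of_val_div_eq {k : ℕ} {x y : ZMod (p ^ k)} (hx : ¬IsUnit x) (hy : ¬IsUnit y)
    (h : x.val / p = y.val / p) : x = y :=
  have : NeZero (p ^ k) := ⟨pow_ne_zero _ hp.ne_zero⟩
  ZMod.val_injective _ <| (Nat.div_left_inj (dvd_val_of_not_isUnit hp hx)
    (dvd_val_of_not_isUnit hp hy)).1 h

lemma natCast_val_div_pow_eq {m n : ℕ} {x y : ZMod (p ^ (m + n))} (hx : ¬IsUnit x)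
    (hy : ¬IsUnit y) (h : x ^ n = y ^ n) :
    ((x.val / p : ℕ) : ZMod (p ^ m)) ^ n = ((y.val / p : ℕ) : ZMod (p ^ m)) ^ n := by
  have : NeZero (p ^ (m + n)) := ⟨pow_ne_zero _ hp.ne_zero⟩
  obtain ⟨x', hx'⟩ := dvd_val_of_not_isUnit hp hx
  obtain ⟨y', hy'⟩ := dvd_val_of_not_isUnit hp hy
  rw [← ZMod.natCast_zmod_val x, ← ZMod.natCast_zmod_val y, ← Nat.cast_pow, ← Nat.cast_pow,
    ZMod.natCast_eq_natCast_iff, hx', hy', mul_pow, mul_pow, pow_add, mul_comm (p ^ m)] at h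
  rw [hx', hy', Nat.mul_div_cancel_left _ hp.pos, Nat.mul_div_cancel_left _ hp.pos,
    ← Nat.cast_pow, ← Nat.cast_pow, ZMod.natCast_eq_natCast_iff]
  exact h.mul_left_cancel' (pow_ne_zero _ hp.ne_zero)

variable {n : ℕ} (hn : n ≠ 0)
include hn

lemma card_not_isUnit_collisions_le (k : ℕ) :
    Nat.card {z : ZMod (p ^ (k + 1)) × ZMod (p ^ (k + 1)) //
      z.1 ^ n = z.2 ^ n ∧ ¬IsUnit z.1} ≤ (p ^ k) ^ 2 := by
  calc _ ≤ Nat.card (Fin (p ^ k) × Fin (p ^ k)) :=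
        Nat.card_le_card_of_injective
          (fun z => (⟨_, val_div_lt hp k z.1.1⟩, ⟨_, val_div_lt hp k z.1.2⟩)) fun z w h => ?_
    _ = (p ^ k) ^ 2 := by simp [sq]
  simp only [Prod.mk.injEq, Fin.mk.injEq] at h
  exact Subtype.ext <| Prod.ext (eq_of_val_div_eq hp z.2.2 w.2.2 h.1) <|
    eq_of_val_div_eq hp ((isUnit_iff_of_pow_eq hn z.2.1).not.1 z.2.2)
      ((isUnit_iff_of_pow_eq hn w.2.1).not.1 w.2.2) h.2

/-- Writing `x = p x'` and `y = p y'`, the congruence `xⁿ ≡ yⁿ` modulo `p^(m+n)` becomes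
`x'ⁿ ≡ y'ⁿ` modulo `pᵐ`, with `x'` and `y'` ranging over `p^(n-1)` complete residue systems. -/
lemma card_not_isUnit_collisions_le_mul (m : ℕ) :
    Nat.card {z : ZMod (p ^ (m + n)) × ZMod (p ^ (m + n)) // z.1 ^ n = z.2 ^ n ∧ ¬IsUnit z.1} ≤
      (p ^ (n - 1)) ^ 2 * powerCollisions n (ZMod (p ^ m)) := by
  have : NeZero (p ^ m) := ⟨pow_ne_zero _ hp.ne_zero⟩
  have block_lt (x : ZMod (p ^ (m + n))) : x.val / p / p ^ m < p ^ (n - 1) := by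
    have : NeZero (p ^ (m + n)) := ⟨pow_ne_zero _ hp.ne_zero⟩
    refine Nat.div_lt_of_lt_mul (Nat.div_lt_of_lt_mul ?_)
    rw [← pow_add, ← pow_succ', show m + (n - 1) + 1 = m + n by omega]
    exact ZMod.val_lt x
  have eq_of_block_eq {x y : ZMod (p ^ (m + n))} (hx : ¬IsUnit x) (hy : ¬IsUnit y)
      (hdiv : x.val / p / p ^ m = y.val / p / p ^ m)
      (hmod : ((x.val / p : ℕ) : ZMod (p ^ m)) = (y.val / p : ℕ)) : x = y :=
    eq_of_val_div_eq hp hx hy <| by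
      rw [ZMod.natCast_eq_natCast_iff'] at hmod
      rw [← Nat.div_add_mod (x.val / p) (p ^ m), hdiv, hmod, Nat.div_add_mod]
  rw [show (p ^ (n - 1)) ^ 2 = Nat.card (Fin (p ^ (n - 1)) × Fin (p ^ (n - 1))) by simp [sq],
    powerCollisions, ← Nat.card_prod]
  refine Nat.card_le_card_of_injective
    (fun z => ((⟨_, block_lt z.1.1⟩, ⟨_, block_lt z.1.2⟩),
      ⟨((z.1.1.val / p : ℕ), (z.1.2.val / p : ℕ)),
        natCast_val_div_pow_eq hp z.2.2 ((isUnit_iff_of_pow_eq hn z.2.1).not.1 z.2.2) z.2.1⟩))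
    fun z w h => ?_
  simp only [Prod.mk.injEq, Fin.mk.injEq, Subtype.mk.injEq] at h
  exact Subtype.ext <| Prod.ext (eq_of_block_eq z.2.2 w.2.2 h.1.1 h.2.1) <|
    eq_of_block_eq ((isUnit_iff_of_pow_eq hn z.2.1).not.1 z.2.2)
      ((isUnit_iff_of_pow_eq hn w.2.1).not.1 w.2.2) h.1.2 h.2.2

lemma card_isUnit_collisions_prime_pow_le (k : ℕ) :
    Nat.card {z : ZMod (p ^ k) × ZMod (p ^ k) // z.1 ^ n = z.2 ^ n ∧ IsUnit z.1} ≤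
      2 * n * p ^ k := by
  have : NeZero (p ^ k) := ⟨pow_ne_zero _ hp.ne_zero⟩
  refine (card_isUnit_collisions_le hn _).trans ?_
  rw [Nat.card_eq_fintype_card, ZMod.card_units_eq_totient, mul_comm]
  exact Nat.mul_le_mul (card_rootsOfUnity_zmod_prime_pow_le (Nat.pos_of_ne_zero hn) hp k)
    (Nat.totient_le _)

lemma powerCollisions_prime_pow_succ_le (k : ℕ) :
    powerCollisions n (ZMod (p ^ (k + 1))) ≤ 2 * n * p ^ (k + 1) + (p ^ k) ^ 2 := by
  have : NeZero (p ^ (k + 1)) := ⟨pow_ne_zero _ hp.ne_zero⟩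
  rw [powerCollisions_eq_add]
  exact add_le_add (card_isUnit_collisions_prime_pow_le hp hn _)
    (card_not_isUnit_collisions_le hp hn k)

lemma powerCollisions_prime_pow_add_le (m : ℕ) :
    powerCollisions n (ZMod (p ^ (m + n))) ≤
      2 * n * p ^ (m + n) + (p ^ (n - 1)) ^ 2 * powerCollisions n (ZMod (p ^ m)) := by
  have : NeZero (p ^ (m + n)) := ⟨pow_ne_zero _ hp.ne_zero⟩
  rw [powerCollisions_eq_add]
  exact add_le_add (card_isUnit_collisions_prime_pow_le hp hn _)
    (card_not_isUnit_collisions_le_mul hp hn m)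

omit hn in
/-- The bound is `(2n + 1)(k + 1)p^((2 - 2/n)k)`, written through an `n`-th root `s` of `p`. -/
lemma powerCollisions_prime_pow_le (hn : 2 ≤ n) {s : ℝ} (hs : 1 ≤ s) (hsp : s ^ n = p) (k : ℕ) :
    (powerCollisions n (ZMod (p ^ k)) : ℝ) ≤ (2 * n + 1) * (k + 1) * s ^ (2 * (n - 1) * k) := by
  have hn₀ : n ≠ 0 := by omega
  have unit_le (k : ℕ) : (2 * n * p ^ k : ℝ) ≤ 2 * n * s ^ (2 * (n - 1) * k) := by
    rw [← hsp, ← pow_mul]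
    gcongr
    omega
  induction k using Nat.strong_induction_on with
  | _ k ih =>
    obtain rfl | hk := Nat.eq_zero_or_pos k
    · have : Subsingleton (ZMod (p ^ 0)) := ZMod.subsingleton_iff.2 (pow_zero p)
      rw [powerCollisions_of_subsingleton]
      simp
    obtain hkn | hkn := le_or_gt k n
    · obtain ⟨j, rfl⟩ := Nat.exists_eq_add_of_le' hk
      have rec_le : (powerCollisions n (ZMod (p ^ (j + 1))) : ℝ) ≤
          2 * n * p ^ (j + 1) + (p ^ j) ^ 2 := by
        exact_mod_cast powerCollisions_prime_pow_succ_le hp hn₀ j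
      have sq_le : ((p : ℝ) ^ j) ^ 2 ≤ s ^ (2 * (n - 1) * (j + 1)) := by
        rw [← hsp, ← pow_mul, ← pow_mul]
        refine pow_le_pow_right₀ hs ?_
        obtain ⟨N, rfl⟩ := Nat.exists_eq_add_of_le' (show 1 ≤ n by omega)
        rw [Nat.add_sub_cancel]
        nlinarith
      calc _ ≤ (2 * n + 1) * 1 * s ^ (2 * (n - 1) * (j + 1)) := by
            linarith [unit_le (j + 1)]
        _ ≤ _ := by gcongr; norm_cast; omega
    · obtain ⟨m, rfl⟩ := Nat.exists_eq_add_of_le' hkn.le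
      have rec_le : (powerCollisions n (ZMod (p ^ (m + n))) : ℝ) ≤
          2 * n * p ^ (m + n) + (p ^ (n - 1)) ^ 2 * powerCollisions n (ZMod (p ^ m)) := by
        exact_mod_cast powerCollisions_prime_pow_add_le hp hn₀ m
      have hn' : (2 : ℝ) ≤ n := mod_cast hn
      calc _ ≤ 2 * n * s ^ (2 * (n - 1) * (m + n)) +
            (p ^ (n - 1)) ^ 2 * ((2 * n + 1) * (m + 1) * s ^ (2 * (n - 1) * m)) :=
          rec_le.trans (add_le_add (unit_le _) (by gcongr; exact ih m (by omega)))
        _ = (2 * n + (2 * n + 1) * (m + 1)) * s ^ (2 * (n - 1) * (m + n)) := by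
          rw [← hsp, ← pow_mul, ← pow_mul]; ring
        _ ≤ _ := by push_cast; gcongr; nlinarith

end PrimePower

end Collisions

/-! ### The multiplicative majorant of the complete sums -/

section Majorant

/-- A multiplicative majorant of the squares `|q⁻¹ ∑_{y mod q} e(a yⁿ / q)|²`, `(a, q) = 1`, of
the normalised complete sums; it is defined by the data entering
`card_units_mul_norm_powerCharSum_sq_le`. -/
noncomputable def completeSumMajorant (n q : ℕ) : ℝ :=
  powerCollisions n (ZMod q) * Nat.card (rootsOfUnity n (ZMod q)) / (q * q.totient)

lemma completeSumMajorant_nonneg (n q : ℕ) : 0 ≤ completeSumMajorant n q := by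
  unfold completeSumMajorant; positivity

lemma completeSumMajorant_zero (n : ℕ) : completeSumMajorant n 0 = 0 := by
  simp [completeSumMajorant]

lemma completeSumMajorant_one (n : ℕ) : completeSumMajorant n 1 = 1 := by
  rw [completeSumMajorant, powerCollisions_of_subsingleton, Nat.card_eq_one_iff_unique.2
    ⟨inferInstance, inferInstance⟩]
  simp

lemma completeSumMajorant_mul (n : ℕ) {a b : ℕ} (h : a.Coprime b) :
    completeSumMajorant n (a * b) = completeSumMajorant n a * completeSumMajorant n b := by
  rw [completeSumMajorant, powerCollisions_congr n (ZMod.chineseRemainder h).toMulEquiv,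
    powerCollisions_prod, Nat.card_congr
      ((ZMod.chineseRemainder h).toMulEquiv.restrictRootsOfUnity n).toEquiv,
    card_rootsOfUnity_prod, Nat.totient_mul h, completeSumMajorant, completeSumMajorant]
  push_cast
  rw [div_mul_div_comm]
  congr 1 <;> ring

variable {p : ℕ} (hp : p.Prime) {n : ℕ}
include hp

lemma prime_pow_le_two_mul_totient (k : ℕ) : p ^ k ≤ 2 * (p ^ k).totient := by
  obtain rfl | hk := Nat.eq_zero_or_pos k
  · simp
  obtain ⟨m, rfl⟩ := Nat.exists_eq_add_of_le' hk
  rw [Nat.totient_prime_pow_succ hp, pow_succ, mul_left_comm]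
  have := hp.two_le
  gcongr
  omega

lemma completeSumMajorant_prime_pow_le_collisions (hn : n ≠ 0) (k : ℕ) :
    completeSumMajorant n (p ^ k) ≤
      4 * n * powerCollisions n (ZMod (p ^ k)) / ((p : ℝ) ^ k) ^ 2 := by
  have hp₀ : (0 : ℝ) < p := mod_cast hp.pos
  have roots_le : (Nat.card (rootsOfUnity n (ZMod (p ^ k))) : ℝ) ≤ 2 * n := by
    exact_mod_cast card_rootsOfUnity_zmod_prime_pow_le (Nat.pos_of_ne_zero hn) hp k
  have totient_ge : (p ^ k : ℝ) ≤ 2 * (p ^ k).totient :=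
    mod_cast prime_pow_le_two_mul_totient hp k
  have totient_pos : (0 : ℝ) < (p ^ k).totient := mod_cast Nat.totient_pos.2 (pow_pos hp.pos k)
  rw [completeSumMajorant, div_le_div_iff₀ (by push_cast; positivity) (by positivity)]
  push_cast
  calc _ ≤ powerCollisions n (ZMod (p ^ k)) * (2 * n) * (p ^ k * (2 * (p ^ k).totient) : ℝ) := by
        rw [sq ((p : ℝ) ^ k)]; gcongr
    _ = _ := by ring

lemma completeSumMajorant_prime_pow_le (hn : 2 ≤ n) (k : ℕ) :
    completeSumMajorant n (p ^ k) ≤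
      4 * n * (2 * n + 1) * (k + 1) * ((p : ℝ) ^ k) ^ (-(2 / n : ℝ)) := by
  have hp₁ : (1 : ℝ) ≤ p := mod_cast hp.one_lt.le
  set s : ℝ := (p : ℝ) ^ (n⁻¹ : ℝ)
  have hs : 1 ≤ s := Real.one_le_rpow hp₁ (by positivity)
  have hsp : s ^ n = p := Real.rpow_inv_natCast_pow (by positivity) (by omega)
  have pow_eq : ((p : ℝ) ^ k) ^ (-(2 / n : ℝ)) = (s ^ (2 * k))⁻¹ := by
    rw [← Real.rpow_natCast s, ← Real.rpow_neg (by positivity), ← Real.rpow_mul (by positivity),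
      ← Real.rpow_natCast_mul (by positivity)]
    congr 1
    push_cast
    ring
  refine (completeSumMajorant_prime_pow_le_collisions hp (by omega) k).trans ?_
  rw [pow_eq, div_le_iff₀ (by positivity)]
  calc _ ≤ 4 * n * ((2 * n + 1) * (k + 1) * s ^ (2 * (n - 1) * k)) := by
        gcongr; exact powerCollisions_prime_pow_le hp hn hs hsp k
    _ = 4 * n * (2 * n + 1) * (k + 1) * (s ^ (2 * k))⁻¹ *
          (s ^ (2 * k) * s ^ (2 * (n - 1) * k)) := by field_simp
    _ = _ := by
        rw [← hsp, ← pow_mul, ← pow_mul, ← pow_add]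
        congr 2
        obtain ⟨N, rfl⟩ := Nat.exists_eq_add_of_le' (show 1 ≤ n by omega)
        rw [Nat.add_sub_cancel]; ring

lemma completeSumMajorant_prime_le (hn : n ≠ 0) :
    completeSumMajorant n p ≤ 4 * n * (2 * n + 1) / p := by
  have hp₁ : (1 : ℝ) ≤ p := mod_cast hp.one_lt.le
  have collisions_le : (powerCollisions n (ZMod p) : ℝ) ≤ (2 * n + 1) * p := by
    have h := powerCollisions_prime_pow_succ_le hp hn 0
    rw [show p ^ (0 + 1) = p from pow_one p, pow_zero, one_pow] at h
    calc _ ≤ (2 * n * p + 1 : ℝ) := mod_cast h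
      _ ≤ _ := by linarith
  have h := completeSumMajorant_prime_pow_le_collisions hp hn 1
  rw [pow_one, pow_one] at h
  calc _ ≤ 4 * n * ((2 * n + 1) * p) / (p : ℝ) ^ 2 := h.trans (by gcongr)
    _ = _ := by field_simp

end Majorant

/-! ### Summability of multiplicative functions -/

section Summability

variable {f : ℕ → ℝ}

lemma sum_range_le_prod_primesBelow_tsum (hf : ∀ n, 0 ≤ f n) (hf₀ : f 0 = 0) (hf₁ : f 1 = 1)
    (hmul : ∀ {m n : ℕ}, m.Coprime n → f (m * n) = f m * f n)
    (hsum : ∀ {p : ℕ}, p.Prime → Summable fun k => f (p ^ k)) (N : ℕ) :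
    ∑ n ∈ Finset.range N, f n ≤ ∏ p ∈ N.primesBelow, ∑' k, f (p ^ k) := by
  have euler := (EulerProduct.summable_and_hasSum_smoothNumbers_prod_primesBelow_tsum hf₁ hmul
    (fun hp => by simpa only [Real.norm_of_nonneg (hf _)] using hsum hp) N).2
  refine le_of_eq_of_le ?_ <|
    sum_le_hasSum ((Finset.range N).subtype (· ∈ N.smoothNumbers)) (fun i _ => hf _) euler
  rw [Finset.sum_subtype_eq_sum_filter]
  refine (Finset.sum_filter_of_ne fun n hn hne => ?_).symm
  have hn₀ : n ≠ 0 := fun h => hne (h ▸ hf₀)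
  exact Nat.mem_smoothNumbers_of_lt (Nat.pos_of_ne_zero hn₀) (Finset.mem_range.1 hn)

lemma summable_of_le_mul_rpow_prime_pow (hf : ∀ n, 0 ≤ f n) (hf₀ : f 0 = 0) (hf₁ : f 1 = 1)
    (hmul : ∀ {m n : ℕ}, m.Coprime n → f (m * n) = f m * f n) {b : ℕ → ℝ} (hb : Summable b)
    {s : ℝ} (hs : 1 < s)
    (hle : ∀ p : ℕ, p.Prime → ∀ k, f (p ^ (k + 1)) ≤ b k * (p : ℝ) ^ (-s)) : Summable f := by
  have hsum {p : ℕ} (hp : p.Prime) : Summable fun k => f (p ^ k) :=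
    (summable_nat_add_iff 1).1 <|
      Summable.of_nonneg_of_le (fun k => hf _) (hle p hp) (hb.mul_right _)
  have hb₀ (k : ℕ) : 0 ≤ b k :=
    nonneg_of_mul_nonneg_left ((hf _).trans (hle 2 Nat.prime_two k)) (by positivity)
  have factor_le {p : ℕ} (hp : p.Prime) :
      ∑' k, f (p ^ k) ≤ Real.exp ((∑' k, b k) * (p : ℝ) ^ (-s)) := by
    rw [(hsum hp).tsum_eq_zero_add, pow_zero, hf₁, ← tsum_mul_right, add_comm]
    refine le_trans ?_ (Real.add_one_le_exp _)
    gcongr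
    exacts [(summable_nat_add_iff 1).2 (hsum hp), hb.mul_right _, hle p hp _]
  have zeta_summable : Summable fun n : ℕ => (n : ℝ) ^ (-s) :=
    Real.summable_nat_rpow.2 (by linarith)
  refine summable_of_sum_range_le (c := Real.exp ((∑' k, b k) * ∑' n : ℕ, (n : ℝ) ^ (-s))) hf
    fun N => ?_
  calc ∑ n ∈ Finset.range N, f n
      ≤ ∏ p ∈ N.primesBelow, ∑' k, f (p ^ k) :=
        sum_range_le_prod_primesBelow_tsum hf hf₀ hf₁ hmul hsum N
    _ ≤ ∏ p ∈ N.primesBelow, Real.exp ((∑' k, b k) * (p : ℝ) ^ (-s)) :=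
        Finset.prod_le_prod (fun p _ => tsum_nonneg fun _ => hf _) fun p hp =>
          factor_le (Nat.mem_primesBelow.1 hp).2
    _ = Real.exp ((∑' k, b k) * ∑ p ∈ N.primesBelow, (p : ℝ) ^ (-s)) := by
        rw [← Real.exp_sum, Finset.mul_sum]
    _ ≤ _ := by
        gcongr
        · exact tsum_nonneg hb₀
        · exact zeta_summable.sum_le_tsum _ fun _ _ => by positivity

lemma summable_add_two_pow_mul_geometric (m : ℕ) {r : ℝ} (hr₀ : 0 < r) (hr₁ : r < 1) :
    Summable fun k : ℕ => ((k : ℝ) + 2) ^ m * r ^ k := by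
  have h := summable_pow_mul_geometric_of_norm_lt_one (R := ℝ) m (r := r)
    (by rwa [Real.norm_of_nonneg hr₀.le])
  refine (((summable_nat_add_iff 2).2 h).mul_right (r ^ 2)⁻¹).congr fun k => ?_
  push_cast
  field_simp
  ring

variable {n : ℕ}

lemma prime_pow_rpow_neg_two_div_le (hn₀ : 0 < n) (hn₄ : n ≤ 4) {p : ℕ} (hp : 2 ≤ p) (j : ℕ) :
    ((p : ℝ) ^ (j + 2)) ^ (-(2 / n : ℝ)) ≤ 2 * (√2)⁻¹ ^ (j + 1) * (p : ℝ)⁻¹ := by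
  have hp₂ : (2 : ℝ) ≤ p := mod_cast hp
  have hn' : (0 : ℝ) < n := mod_cast hn₀
  have exponent_le : -(2 / n : ℝ) ≤ -(1 / 2) := by
    have : (n : ℝ) ≤ 4 := mod_cast hn₄
    rw [neg_le_neg_iff, div_le_div_iff₀ two_pos hn']
    linarith
  have one_le : 1 ≤ 2 * (√2)⁻¹ := by
    rw [← div_eq_mul_inv, Real.div_sqrt]
    exact Real.one_lt_sqrt_two.le
  calc ((p : ℝ) ^ (j + 2)) ^ (-(2 / n : ℝ))
      ≤ ((p : ℝ) ^ (j + 2)) ^ (-(1 / 2 : ℝ)) :=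
        Real.rpow_le_rpow_of_exponent_le (one_le_pow₀ (by linarith)) exponent_le
    _ = (√p)⁻¹ ^ j * (p : ℝ)⁻¹ := by
        rw [← Real.rpow_pow_comm (by positivity), Real.rpow_neg (by positivity),
          ← Real.sqrt_eq_rpow, pow_add, inv_pow _ 2, Real.sq_sqrt (by positivity)]
    _ ≤ (√2)⁻¹ ^ j * (2 * (√2)⁻¹) * (p : ℝ)⁻¹ := by
        gcongr
        exact (le_mul_of_one_le_right (by positivity) one_le).trans' (by gcongr)
    _ = _ := by ring

lemma completeSumMajorant_prime_pow_succ_le (hn : 2 ≤ n) (hn₄ : n ≤ 4) {p : ℕ} (hp : p.Prime)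
    (k : ℕ) : completeSumMajorant n (p ^ (k + 1)) ≤
      8 * n * (2 * n + 1) * (k + 2) * (√2)⁻¹ ^ k * (p : ℝ)⁻¹ := by
  have hp₂ : (2 : ℝ) ≤ p := mod_cast hp.two_le
  have hn₂ : (2 : ℝ) ≤ n := mod_cast hn
  obtain rfl | hk := Nat.eq_zero_or_pos k
  · rw [zero_add, pow_one, pow_zero]
    refine (completeSumMajorant_prime_le hp (by omega)).trans ?_
    rw [div_eq_mul_inv]
    gcongr ?_ * _
    push_cast
    nlinarith
  obtain ⟨j, rfl⟩ := Nat.exists_eq_add_of_le' hk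
  calc _ ≤ 4 * n * (2 * n + 1) * ((j + 1 + 1 : ℕ) + 1 : ℝ) *
        ((p : ℝ) ^ (j + 1 + 1)) ^ (-(2 / n : ℝ)) := completeSumMajorant_prime_pow_le hp hn _
    _ ≤ 4 * n * (2 * n + 1) * ((j + 1 + 1 : ℕ) + 1 : ℝ) *
        (2 * (√2)⁻¹ ^ (j + 1) * (p : ℝ)⁻¹) := by
        gcongr
        exact prime_pow_rpow_neg_two_div_le (by omega) hn₄ hp.two_le j
    _ = _ := by push_cast; ring

lemma summable_completeSumMajorant_mul_card_divisors (hn : 2 ≤ n) (hn₄ : n ≤ 4) {ε : ℝ}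
    (hε : 0 < ε) :
    Summable fun q : ℕ => completeSumMajorant n q * q.divisors.card * (q : ℝ) ^ (-ε) := by
  have sqrt_inv_lt : (√2)⁻¹ < 1 := inv_lt_one_of_one_lt₀ Real.one_lt_sqrt_two
  refine summable_of_le_mul_rpow_prime_pow (s := 1 + ε)
    (b := fun k => 8 * n * (2 * n + 1) * (((k : ℝ) + 2) ^ 2 * (√2)⁻¹ ^ k))
    (fun q => ?_) ?_ ?_ (fun {a b} hab => ?_)
    ((summable_add_two_pow_mul_geometric 2 (by positivity) sqrt_inv_lt).mul_left _)
    (by linarith) fun p hp k => ?_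
  · exact mul_nonneg (mul_nonneg (completeSumMajorant_nonneg n q) (by positivity)) (by positivity)
  · rw [completeSumMajorant_zero, zero_mul, zero_mul]
  · simp [completeSumMajorant_one]
  · rw [completeSumMajorant_mul n hab, hab.card_divisors_mul, Nat.cast_mul, Nat.cast_mul,
      Real.mul_rpow (by positivity) (by positivity)]
    ring
  · have hp₁ : (1 : ℝ) ≤ p := mod_cast hp.one_lt.le
    rw [Nat.divisors_prime_pow hp, Finset.card_map, Finset.card_range, neg_add,
      Real.rpow_add (by positivity), Real.rpow_neg_one]
    calc _ ≤ 8 * n * (2 * n + 1) * (k + 2) * (√2)⁻¹ ^ k * (p : ℝ)⁻¹ * (k + 1 + 1 : ℕ) *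
          (p : ℝ) ^ (-ε) := by
          gcongr ?_ * _ * ?_
          · exact completeSumMajorant_prime_pow_succ_le hn hn₄ hp k
          · rw [Nat.cast_pow]
            exact Real.rpow_le_rpow_of_nonpos (by positivity) (le_self_pow₀ hp₁ k.succ_ne_zero)
              (by linarith)
      _ = _ := by push_cast; ring

lemma completeSumMajorant_prime_pow_mul_rpow_le (hn : 2 ≤ n) {p : ℕ} (hp : p.Prime) (k : ℕ)
    (ε : ℝ) : completeSumMajorant n (p ^ k) * ((p : ℝ) ^ k) ^ (2 / n - ε) ≤
      4 * n * (2 * n + 1) * (k + 1) * ((p : ℝ) ^ (-ε)) ^ k := by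
  have hp₀ : (0 : ℝ) < p := mod_cast hp.pos
  calc _ ≤ 4 * n * (2 * n + 1) * (k + 1) * ((p : ℝ) ^ k) ^ (-(2 / n : ℝ)) *
          ((p : ℝ) ^ k) ^ (2 / n - ε) := by
        gcongr
        exact completeSumMajorant_prime_pow_le hp hn k
    _ = _ := by
        rw [mul_assoc, ← Real.rpow_add (pow_pos hp₀ k),
          show -(2 / n : ℝ) + (2 / n - ε) = -ε by ring, ← Real.rpow_pow_comm hp₀.le]

lemma summable_completeSumMajorant_mul_rpow_pow (hn : 2 ≤ n) {ε : ℝ} {N : ℕ} (hN : 2 ≤ N * ε) :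
    Summable fun q : ℕ => (completeSumMajorant n q * (q : ℝ) ^ (2 / n - ε)) ^ N := by
  have hN₀ : N ≠ 0 := by rintro rfl; norm_num at hN
  refine summable_of_le_mul_rpow_prime_pow (s := N * ε)
    (b := fun k => (4 * n * (2 * n + 1) : ℝ) ^ N * (((k : ℝ) + 2) ^ N * (1 / 4) ^ k))
    (fun q => ?_) ?_ ?_ (fun {a b} hab => ?_)
    ((summable_add_two_pow_mul_geometric N (by norm_num) (by norm_num)).mul_left _)
    (by linarith) fun p hp k => ?_
  · exact pow_nonneg (mul_nonneg (completeSumMajorant_nonneg n q) (by positivity)) N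
  · rw [completeSumMajorant_zero, zero_mul, zero_pow hN₀]
  · rw [completeSumMajorant_one, Nat.cast_one, Real.one_rpow, one_mul, one_pow]
  · rw [completeSumMajorant_mul n hab, Nat.cast_mul, Real.mul_rpow (by positivity) (by positivity)]
    ring
  have hp₂ : (2 : ℝ) ≤ p := mod_cast hp.two_le
  have decay : (p : ℝ) ^ (-(N * ε)) ≤ 1 / 4 :=
    calc (p : ℝ) ^ (-(N * ε)) ≤ (p : ℝ) ^ (-2 : ℝ) :=
          Real.rpow_le_rpow_of_exponent_le (by linarith) (by linarith)
      _ ≤ (2 : ℝ) ^ (-2 : ℝ) := Real.rpow_le_rpow_of_nonpos two_pos hp₂ (by norm_num)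
      _ = 1 / 4 := by norm_num
  have local_le := completeSumMajorant_prime_pow_mul_rpow_le hn hp (k + 1) ε
  push_cast at local_le ⊢
  rw [add_assoc (k : ℝ), one_add_one_eq_two] at local_le
  calc _ ≤ (4 * n * (2 * n + 1) * (k + 2) * ((p : ℝ) ^ (-ε)) ^ (k + 1)) ^ N := by
        gcongr
        exact mul_nonneg (completeSumMajorant_nonneg n _) (by positivity)
    _ = (4 * n * (2 * n + 1) : ℝ) ^ N * ((k + 2) ^ N * ((p : ℝ) ^ (-(N * ε))) ^ k) *
          (p : ℝ) ^ (-(N * ε)) := by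
        rw [show -(N * ε) = -ε * N by ring, Real.rpow_mul (by positivity), Real.rpow_natCast,
          mul_pow _ (_ ^ (k + 1)), mul_pow _ (k + 2 : ℝ), ← pow_mul, ← pow_mul]
        ring
    _ ≤ _ := by gcongr

lemma exists_completeSumMajorant_le_rpow (hn : 2 ≤ n) {ε : ℝ} (hε : 0 < ε) :
    ∃ C > 0, ∀ q : ℕ, q ≠ 0 → completeSumMajorant n q ≤ C * (q : ℝ) ^ (-(2 / n : ℝ) + ε) := by
  obtain ⟨N, hN⟩ : ∃ N : ℕ, 2 / ε ≤ N := exists_nat_ge _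
  have hNε : 2 ≤ N * ε := (div_le_iff₀ hε).1 hN
  have hN₀ : N ≠ 0 := by rintro rfl; norm_num at hNε
  set f : ℕ → ℝ := fun q => (completeSumMajorant n q * (q : ℝ) ^ (2 / n - ε)) ^ N with hf
  have hf_nonneg (q : ℕ) : 0 ≤ f q :=
    pow_nonneg (mul_nonneg (completeSumMajorant_nonneg n q) (by positivity)) N
  set B := ∑' q, f q
  have f_le (q : ℕ) : f q ≤ B :=
    (summable_completeSumMajorant_mul_rpow_pow hn hNε).le_tsum q fun j _ => hf_nonneg j
  have one_le_B : 1 ≤ B := by simpa [hf, completeSumMajorant_one] using f_le 1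
  refine ⟨B, by linarith, fun q hq => ?_⟩
  have hq₀ : (0 : ℝ) < q := mod_cast Nat.pos_of_ne_zero hq
  have base_le : completeSumMajorant n q * (q : ℝ) ^ (2 / n - ε) ≤ B :=
    le_of_pow_le_pow_left₀ hN₀ (by positivity) ((f_le q).trans (le_self_pow₀ one_le_B hN₀))
  rwa [show -(2 / n : ℝ) + ε = -(2 / n - ε) by ring, Real.rpow_neg hq₀.le, ← div_eq_mul_inv,
    le_div_iff₀ (by positivity)]

end Summability

/-! ### Complete exponential sums -/

section AdditiveCharacter

lemma eC_eq_fourierChar (x : ℝ) : eC x = Real.fourierChar x := by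
  rw [Real.fourierChar_apply, eC]
  push_cast
  ring_nf

lemma eC_add (x y : ℝ) : eC (x + y) = eC x * eC y := by
  simp only [eC_eq_fourierChar, AddChar.map_add_eq_mul, Circle.coe_mul]

lemma eC_zero : eC 0 = 1 := by
  simp only [eC_eq_fourierChar, AddChar.map_zero_eq_one, Circle.coe_one]

lemma norm_eC (x : ℝ) : ‖eC x‖ = 1 := by
  rw [eC_eq_fourierChar, Circle.norm_coe]

lemma eC_re (x : ℝ) : (eC x).re = Real.cos (2 * Real.pi * x) := by
  rw [eC_eq_fourierChar, Real.fourierChar_apply, Complex.exp_ofReal_mul_I_re]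

lemma conj_eC (x : ℝ) : (starRingEnd ℂ) (eC x) = eC (-x) := by
  rw [eC_eq_fourierChar, eC_eq_fourierChar, AddChar.map_neg_eq_inv, Circle.coe_inv_eq_conj]

lemma eC_eq_one_iff {x : ℝ} : eC x = 1 ↔ ∃ m : ℤ, x = m := by
  rw [eC, Complex.exp_eq_one_iff]
  refine exists_congr fun m => ?_
  rw [mul_comm (m : ℂ), mul_right_inj' Complex.two_pi_I_ne_zero]
  exact_mod_cast Iff.rfl

lemma eC_add_intCast (x : ℝ) (m : ℤ) : eC (x + m) = eC x := by
  rw [eC_add, eC_eq_one_iff.2 ⟨m, rfl⟩, mul_one]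

lemma stdAddChar_intCast_eq_eC (q : ℕ) [NeZero q] (j : ℤ) :
    ZMod.stdAddChar (j : ZMod q) = eC (j / q) := by
  rw [ZMod.stdAddChar_coe, eC]
  push_cast
  ring_nf

end AdditiveCharacter

section PeriodicSums

lemma sum_range_add_of_periodic {M : Type*} [AddCancelCommMonoid M] {f : ℕ → M} {L : ℕ}
    (hf : Function.Periodic f L) (d : ℕ) :
    ∑ x ∈ Finset.range L, f (x + d) = ∑ x ∈ Finset.range L, f x := by
  induction d with
  | zero => rfl
  | succ d ih =>
    have wrap : f (L + d) = f (0 + d) := by rw [zero_add, add_comm, hf]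
    have h := Finset.sum_range_succ' (fun x => f (x + d)) L
    rw [Finset.sum_range_succ, wrap] at h
    rw [← ih, add_right_cancel h]
    simp only [add_right_comm, add_assoc]

lemma sum_range_mul_of_periodic {M : Type*} [AddCommMonoid M] {f : ℕ → M} {d : ℕ}
    (hf : Function.Periodic f d) (m : ℕ) :
    ∑ x ∈ Finset.range (d * m), f x = m • ∑ x ∈ Finset.range d, f x := by
  induction m with
  | zero => rw [mul_zero, Finset.sum_range_zero, zero_nsmul]
  | succ m ih =>
    rw [mul_add_one, Finset.sum_range_add, ih, succ_nsmul]
    congr 1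
    refine Finset.sum_congr rfl fun x _ => ?_
    rw [add_comm, mul_comm]
    exact hf.nat_mul m x

lemma sum_range_eq_zero_of_map_add_eq_mul {K : Type*} [Field K] {f : ℕ → K} {L d : ℕ} {ω : K}
    (hf : Function.Periodic f L) (hd : ∀ x, f (x + d) = ω * f x) (hω : ω ≠ 1) :
    ∑ x ∈ Finset.range L, f x = 0 := by
  have h := sum_range_add_of_periodic hf d
  simp only [hd, ← Finset.mul_sum] at h
  exact (mul_left_eq_self₀.1 h).resolve_left hω

lemma sum_range_natCast_zmod {M : Type*} [AddCommMonoid M] (q : ℕ) [NeZero q] (F : ZMod q → M) :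
    ∑ y ∈ Finset.range q, F y = ∑ y, F y :=
  Finset.sum_bij' (fun y _ => (y : ZMod q)) (fun z _ => z.val) (fun _ _ => Finset.mem_univ _)
    (fun z _ => Finset.mem_range.2 z.val_lt)
    (fun _ hy => ZMod.val_cast_of_lt (Finset.mem_range.1 hy))
    (fun z _ => ZMod.natCast_zmod_val z) fun _ _ => rfl

end PeriodicSums

section CompleteSum

variable (n : ℕ)

/-- The normalised complete exponential sum `q⁻¹ ∑_{y mod q} e(a yⁿ / q)` attached to a rational
number `r = a / q` in lowest terms. -/
noncomputable def completeSum (r : ℚ) : ℂ :=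
  (∑ y ∈ Finset.range r.den, eC (r * (y : ℝ) ^ n)) / r.den

lemma exists_intCast_eq_ratCast_mul {r : ℚ} {d : ℕ} (hd : r.den ∣ d) :
    ∃ m : ℤ, (r : ℝ) * d = m := by
  obtain ⟨m, rfl⟩ := hd
  refine ⟨r.num * m, ?_⟩
  have hden : (r : ℝ) * r.den = r.num := mod_cast Rat.mul_den_eq_num r
  push_cast
  rw [← mul_assoc, hden]

lemma periodic_eC_mul_pow {r : ℚ} {d : ℕ} (hd : r.den ∣ d) :
    Function.Periodic (fun x : ℕ => eC (r * (x : ℝ) ^ n)) d := by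
  intro x
  obtain ⟨m, hm⟩ := exists_intCast_eq_ratCast_mul hd
  obtain ⟨t, ht⟩ : ((d : ℤ)) ∣ (x + d) ^ n - x ^ n := by
    simpa only [add_sub_cancel_left] using sub_dvd_pow_sub_pow ((x : ℤ) + d) x n
  have ht' : ((x + d : ℕ) : ℝ) ^ n = x ^ n + d * t := by
    rw [← sub_eq_iff_eq_add']
    exact_mod_cast ht
  dsimp only
  rw [ht', mul_add, ← mul_assoc, hm, ← Int.cast_mul, eC_add_intCast]

lemma sum_range_eC_mul_pow {r : ℚ} {d : ℕ} (hd : r.den ∣ d) :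
    ∑ y ∈ Finset.range d, eC (r * (y : ℝ) ^ n) = d * completeSum n r := by
  obtain ⟨m, rfl⟩ := hd
  have hden : (r.den : ℂ) ≠ 0 := Nat.cast_ne_zero.2 r.den_ne_zero
  rw [sum_range_mul_of_periodic (periodic_eC_mul_pow n dvd_rfl), completeSum, nsmul_eq_mul]
  push_cast
  field_simp

lemma powerCharSum_stdAddChar_intCast (q : ℕ) [NeZero q] (a : ℤ) :
    powerCharSum ZMod.stdAddChar n (a : ZMod q) = q * completeSum n (a / q) := by
  have hden : ((a : ℚ) / q).den ∣ q := mod_cast Rat.den_dvd a q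
  rw [← sum_range_eC_mul_pow n hden, powerCharSum, ← sum_range_natCast_zmod]
  refine Finset.sum_congr rfl fun y _ => ?_
  have h := stdAddChar_intCast_eq_eC q (a * y ^ n)
  push_cast at h ⊢
  rw [h, div_mul_eq_mul_div]

lemma norm_completeSum_sq_le_completeSumMajorant (r : ℚ) :
    ‖completeSum n r‖ ^ 2 ≤ completeSumMajorant n r.den := by
  have : NeZero r.den := ⟨r.den_ne_zero⟩
  obtain ⟨u, hu⟩ : IsUnit (r.num : ZMod r.den) := by
    rw [ZMod.coe_int_isUnit_iff_isCoprime, isCoprime_comm]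
    exact Rat.isCoprime_num_den r
  have h := card_units_mul_norm_powerCharSum_sq_le (ZMod.isPrimitive_stdAddChar r.den) n u
  rw [hu, powerCharSum_stdAddChar_intCast, Rat.num_div_den, norm_mul, Complex.norm_natCast,
    mul_pow, ZMod.card_units_eq_totient, ZMod.card] at h
  have hden : (0 : ℝ) < r.den := mod_cast r.pos
  have : (0 : ℝ) < r.den.totient := mod_cast Nat.totient_pos.2 r.pos
  rw [completeSumMajorant, le_div_iff₀ (by positivity)]
  refine le_of_mul_le_mul_left ?_ hden
  linarith

lemma norm_completeSum_le_one (r : ℚ) : ‖completeSum n r‖ ≤ 1 := by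
  have hden : (0 : ℝ) < r.den := mod_cast r.pos
  rw [completeSum, norm_div, Complex.norm_natCast, div_le_one hden]
  refine (norm_sum_le _ _).trans ?_
  simp only [norm_eC, Finset.sum_const, Finset.card_range, nsmul_eq_mul, mul_one, le_refl]

variable {n}

lemma exists_norm_completeSum_le_rpow (hn : 2 ≤ n) :
    ∃ C ≥ 1, ∀ r : ℚ, ‖completeSum n r‖ ≤ C * (r.den : ℝ) ^ (-(1 / (2 * n)) : ℝ) := by
  have : (0 : ℝ) < n := by positivity
  obtain ⟨C, hC, majorant_le⟩ :=
    exists_completeSumMajorant_le_rpow hn (ε := 1 / n) (by positivity)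
  refine ⟨C + 1, by linarith, fun r => ?_⟩
  have hden : (0 : ℝ) < r.den := mod_cast r.pos
  refine le_of_sq_le_sq ?_ (by positivity)
  calc ‖completeSum n r‖ ^ 2
      ≤ C * (r.den : ℝ) ^ (-(2 / n) + 1 / n : ℝ) :=
        (norm_completeSum_sq_le_completeSumMajorant n r).trans (majorant_le _ r.den_ne_zero)
    _ = C * ((r.den : ℝ) ^ (-(1 / (2 * n)) : ℝ)) ^ 2 := by
        rw [← Real.rpow_mul_natCast hden.le]
        congr 2
        field_simp
        norm_num
    _ ≤ (C + 1) ^ 2 * ((r.den : ℝ) ^ (-(1 / (2 * n)) : ℝ)) ^ 2 := by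
        gcongr
        nlinarith
    _ = _ := (mul_pow _ _ _).symm

end CompleteSum

/-! ### A Fejér weight -/

section FejerWeight

variable {H L : ℕ}

/-- The normalised Fejér kernel `H⁻² |∑_{h < H} e(hx / L)|²`: it is bounded below for small `x`, and
against an `L`-periodic quasi-character only its `H` diagonal frequencies survive. -/
noncomputable def fejerWeight (H L x : ℕ) : ℝ :=
  ‖∑ h ∈ Finset.range H, eC (h * x / L)‖ ^ 2 / H ^ 2

lemma fejerWeight_nonneg (H L x : ℕ) : 0 ≤ fejerWeight H L x := by
  unfold fejerWeight; positivity

lemma half_le_fejerWeight {x : ℕ} (hH : 0 < H) (hx : 8 * (H * x) ≤ L) :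
    1 / 2 ≤ fejerWeight H L x := by
  have : (0 : ℝ) < H := mod_cast hH
  have phase_le {h : ℕ} (hh : h ≤ H) : (h * x / L : ℝ) ≤ 1 / 8 := by
    refine div_le_of_le_mul₀ (by positivity) (by norm_num) ?_
    have h₁ : (8 * (H * x) : ℝ) ≤ L := mod_cast hx
    have h₂ : (h : ℝ) * x ≤ H * x := by gcongr
    linarith
  have re_ge {h : ℕ} (hh : h ≤ H) : √2 / 2 ≤ (eC (h * x / L)).re := by
    rw [eC_re, ← Real.cos_pi_div_four]
    refine Real.cos_le_cos_of_nonneg_of_le_pi (by positivity) (by linarith [Real.pi_pos]) ?_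
    nlinarith [Real.pi_pos, phase_le hh]
  have norm_ge : H * (√2 / 2) ≤ ‖∑ h ∈ Finset.range H, eC (h * x / L)‖ :=
    calc H * (√2 / 2) = ∑ h ∈ Finset.range H, √2 / 2 := by
          rw [Finset.sum_const, Finset.card_range, nsmul_eq_mul]
      _ ≤ ∑ h ∈ Finset.range H, (eC (h * x / L)).re :=
          Finset.sum_le_sum fun h hh => re_ge (Finset.mem_range.1 hh).le
      _ ≤ _ := by
          rw [← Complex.re_sum]
          exact Complex.re_le_norm _
  rw [fejerWeight, le_div_iff₀ (by positivity)]
  calc 1 / 2 * (H : ℝ) ^ 2 = (H * (√2 / 2)) ^ 2 := by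
        rw [mul_pow, div_pow, Real.sq_sqrt zero_le_two]
        ring
    _ ≤ _ := by gcongr

lemma fejerWeight_eq_sum (H L x : ℕ) : (fejerWeight H L x : ℂ) =
    ((H : ℂ) ^ 2)⁻¹ * ∑ h ∈ Finset.range H, ∑ k ∈ Finset.range H,
      eC (((h - k : ℤ) : ℝ) * x / L) := by
  have norm_sq_eq : ((‖∑ h ∈ Finset.range H, eC (h * x / L)‖ ^ 2 : ℝ) : ℂ) =
      ∑ h ∈ Finset.range H, ∑ k ∈ Finset.range H, eC (((h - k : ℤ) : ℝ) * x / L) := by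
    rw [Complex.ofReal_pow, ← Complex.mul_conj', map_sum, Finset.sum_mul_sum]
    refine Finset.sum_congr rfl fun h _ => Finset.sum_congr rfl fun k _ => ?_
    rw [conj_eC, ← eC_add]
    push_cast
    ring_nf
  rw [fejerWeight, Complex.ofReal_div, norm_sq_eq, div_eq_inv_mul]
  push_cast
  rfl

lemma sum_range_eC_mul_eC_mul_pow_eq_zero (n : ℕ) {r : ℚ} (hr : r.den ∣ L) (hL : 0 < L) {k : ℤ}
    (hk : k ≠ 0) (hkL : |k| * r.den < L) :
    ∑ x ∈ Finset.range L, eC (k * x / L) * eC (r * (x : ℝ) ^ n) = 0 := by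
  have hL' : (L : ℝ) ≠ 0 := by positivity
  have periodic : Function.Periodic (fun x : ℕ => eC (k * x / L) * eC (r * (x : ℝ) ^ n)) L := by
    intro x
    have hper : eC (r * ((x + L : ℕ) : ℝ) ^ n) = eC (r * (x : ℝ) ^ n) :=
      periodic_eC_mul_pow n hr x
    have hphase : (k * (x + L : ℕ) / L : ℝ) = k * x / L + k := by
      push_cast
      field_simp
    dsimp only
    rw [hper, hphase, eC_add_intCast]
  have shift (x : ℕ) : eC (k * (x + r.den : ℕ) / L) * eC (r * ((x + r.den : ℕ) : ℝ) ^ n) =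
      eC (k * r.den / L) * (eC (k * x / L) * eC (r * (x : ℝ) ^ n)) := by
    have hper : eC (r * ((x + r.den : ℕ) : ℝ) ^ n) = eC (r * (x : ℝ) ^ n) :=
      periodic_eC_mul_pow n dvd_rfl x
    rw [hper, ← mul_assoc, ← eC_add (k * r.den / L)]
    congr 2
    push_cast
    ring
  refine sum_range_eq_zero_of_map_add_eq_mul periodic shift fun h => ?_
  obtain ⟨m, hm⟩ := eC_eq_one_iff.1 h
  rw [div_eq_iff hL'] at hm
  have hm' : k * r.den = m * L := mod_cast hm
  have hdvd : (L : ℤ) ∣ k * r.den := ⟨m, by rw [hm', mul_comm]⟩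
  have hne : k * r.den ≠ 0 := mul_ne_zero hk (mod_cast r.den_ne_zero)
  have := Int.le_of_dvd (abs_pos.2 hne) ((dvd_abs _ _).2 hdvd)
  rw [abs_mul, Nat.abs_cast] at this
  exact this.not_gt hkL

lemma sum_range_fejerWeight_mul_eC (n : ℕ) {r : ℚ} (hr : r.den ∣ L) (hL : 0 < L) (hH : 0 < H)
    (hHL : H * r.den ≤ L) :
    ∑ x ∈ Finset.range L, fejerWeight H L x * eC (r * (x : ℝ) ^ n) =
      (L / H : ℂ) * completeSum n r := by
  have hH' : (H : ℂ) ≠ 0 := Nat.cast_ne_zero.2 hH.ne'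
  have frequency {h k : ℕ} (hh : h ∈ Finset.range H) (hk : k ∈ Finset.range H) :
      ∑ x ∈ Finset.range L, eC (((h - k : ℤ) : ℝ) * x / L) * eC (r * (x : ℝ) ^ n) =
        if h = k then L * completeSum n r else 0 := by
    split_ifs with hkh
    · simp only [hkh, sub_self, Int.cast_zero, zero_mul, zero_div, eC_zero, one_mul]
      exact sum_range_eC_mul_pow n hr
    · rw [Finset.mem_range] at hh hk
      refine sum_range_eC_mul_eC_mul_pow_eq_zero n hr hL (by omega) ?_
      have habs : |(h : ℤ) - k| < H := by
        rw [abs_lt]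
        omega
      have hden : (0 : ℤ) < r.den := mod_cast r.pos
      exact (mul_lt_mul_of_pos_right habs hden).trans_le (mod_cast hHL)
  calc ∑ x ∈ Finset.range L, fejerWeight H L x * eC (r * (x : ℝ) ^ n)
      = ((H : ℂ) ^ 2)⁻¹ * ∑ h ∈ Finset.range H, ∑ k ∈ Finset.range H, ∑ x ∈ Finset.range L,
          eC (((h - k : ℤ) : ℝ) * x / L) * eC (r * (x : ℝ) ^ n) := by
        simp only [fejerWeight_eq_sum, mul_assoc, ← Finset.mul_sum, Finset.sum_mul]
        rw [Finset.sum_comm]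
        simp only [Finset.sum_comm (s := Finset.range L)]
    _ = ((H : ℂ) ^ 2)⁻¹ * ∑ _ ∈ Finset.range H, L * completeSum n r := by
        congr 1
        refine Finset.sum_congr rfl fun _ hh => ?_
        rw [Finset.sum_congr rfl fun _ hk => frequency hh hk, Finset.sum_ite_eq, if_pos hh]
    _ = _ := by
        rw [Finset.sum_const, Finset.card_range, nsmul_eq_mul]
        field_simp

end FejerWeight

/-! ### Duality and large values -/

section Duality

variable {ρ X : Type*} {R : Finset ρ} {A : Finset X}

lemma sum_mul_norm_sum_sq_le (w : X → ℝ) (u : ρ → X → ℂ) {b : ρ → ℂ} (hb : ∀ r, ‖b r‖ ≤ 1) :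
    ∑ x ∈ A, w x * ‖∑ r ∈ R, b r * u r x‖ ^ 2 ≤
      ∑ r ∈ R, ∑ s ∈ R, ‖∑ x ∈ A, w x * (u r x * (starRingEnd ℂ) (u s x))‖ := by
  have expand : ((∑ x ∈ A, w x * ‖∑ r ∈ R, b r * u r x‖ ^ 2 : ℝ) : ℂ) = ∑ r ∈ R, ∑ s ∈ R,
      b r * (starRingEnd ℂ) (b s) * ∑ x ∈ A, w x * (u r x * (starRingEnd ℂ) (u s x)) := by
    push_cast
    simp only [← Complex.mul_conj', map_sum, Finset.sum_mul_sum]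
    simp only [map_mul, Finset.mul_sum]
    rw [Finset.sum_comm]
    refine Finset.sum_congr rfl fun r _ => ?_
    rw [Finset.sum_comm]
    refine Finset.sum_congr rfl fun s _ => Finset.sum_congr rfl fun x _ => ?_
    ring
  refine (le_abs_self _).trans ?_
  rw [← Real.norm_eq_abs, ← Complex.norm_real, expand]
  refine (norm_sum_le _ _).trans <| Finset.sum_le_sum fun r _ =>
    (norm_sum_le _ _).trans <| Finset.sum_le_sum fun s _ => ?_
  rw [norm_mul, norm_mul, RCLike.norm_conj]
  exact mul_le_of_le_one_left (norm_nonneg _) (mul_le_one₀ (hb r) (norm_nonneg _) (hb s))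

lemma mul_sq_sum_norm_sum_mul_le {c : X → ℂ} (hc : ∀ x, ‖c x‖ ≤ 1) {A' : Finset X} (hA : A ⊆ A')
    {w : X → ℝ} (hw : ∀ x, 0 ≤ w x) {κ : ℝ} (hκ : 0 ≤ κ) (hκw : ∀ x ∈ A, κ ≤ w x)
    (u : ρ → X → ℂ) : κ * (∑ r ∈ R, ‖∑ x ∈ A, c x * u r x‖) ^ 2 ≤
      A.card * ∑ r ∈ R, ∑ s ∈ R, ‖∑ x ∈ A', w x * (u r x * (starRingEnd ℂ) (u s x))‖ := by
  choose b hb hbu using fun r => RCLike.exists_norm_eq_mul_self (∑ x ∈ A, c x * u r x)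
  have dual_eq : ((∑ r ∈ R, ‖∑ x ∈ A, c x * u r x‖ : ℝ) : ℂ) =
      ∑ x ∈ A, c x * ∑ r ∈ R, b r * u r x := by
    push_cast
    simp only [← Complex.coe_algebraMap] at hbu ⊢
    simp only [hbu, Finset.mul_sum]
    rw [Finset.sum_comm]
    refine Finset.sum_congr rfl fun x _ => Finset.sum_congr rfl fun r _ => ?_
    ring
  have dual_le : ∑ r ∈ R, ‖∑ x ∈ A, c x * u r x‖ ≤ ∑ x ∈ A, ‖∑ r ∈ R, b r * u r x‖ := by
    refine (le_abs_self _).trans ?_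
    rw [← Real.norm_eq_abs, ← Complex.norm_real, dual_eq]
    refine (norm_sum_le _ _).trans (Finset.sum_le_sum fun x _ => ?_)
    rw [norm_mul]
    exact mul_le_of_le_one_left (norm_nonneg _) (hc x)
  calc κ * (∑ r ∈ R, ‖∑ x ∈ A, c x * u r x‖) ^ 2
      ≤ κ * (∑ x ∈ A, ‖∑ r ∈ R, b r * u r x‖) ^ 2 := by gcongr
    _ ≤ κ * (A.card * ∑ x ∈ A, ‖∑ r ∈ R, b r * u r x‖ ^ 2) := by
        gcongr
        exact sq_sum_le_card_mul_sum_sq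
    _ = A.card * ∑ x ∈ A, κ * ‖∑ r ∈ R, b r * u r x‖ ^ 2 := by
        rw [mul_left_comm, Finset.mul_sum]
    _ ≤ A.card * ∑ x ∈ A', w x * ‖∑ r ∈ R, b r * u r x‖ ^ 2 := by
        gcongr
        refine (Finset.sum_le_sum fun x hx => ?_).trans <|
          Finset.sum_le_sum_of_subset_of_nonneg hA fun x _ _ => mul_nonneg (hw x) (by positivity)
        exact mul_le_mul_of_nonneg_right (hκw x hx) (by positivity)
    _ ≤ _ := by
        gcongr
        exact sum_mul_norm_sum_sq_le w u fun r => (hb r).le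

end Duality

section LargeValues

variable {n N : ℕ} {c : ℕ → ℂ} {R : Finset ℚ}

/-- The weighted Weyl sum `∑_{0 ≤ x ≤ N} c_x e(α xⁿ)`. -/
noncomputable def weightedWeylSum (n N : ℕ) (c : ℕ → ℂ) (α : ℝ) : ℂ :=
  ∑ x ∈ Finset.range (N + 1), c x * eC (α * (x : ℝ) ^ n)

lemma norm_sum_fejerWeight_mul_eC_mul_conj (n : ℕ) {H L : ℕ} {r s : ℚ} (hdvd : (r - s).den ∣ L)
    (hL : 0 < L) (hH : 0 < H) (hHL : H * (r - s).den ≤ L) :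
    ‖∑ x ∈ Finset.range L, fejerWeight H L x *
      (eC (r * (x : ℝ) ^ n) * (starRingEnd ℂ) (eC (s * (x : ℝ) ^ n)))‖ =
      L / H * ‖completeSum n (r - s)‖ := by
  have phase (x : ℕ) : eC (r * (x : ℝ) ^ n) * (starRingEnd ℂ) (eC (s * (x : ℝ) ^ n)) =
      eC ((r - s : ℚ) * (x : ℝ) ^ n) := by
    rw [conj_eC, ← eC_add]
    push_cast
    ring_nf
  simp only [phase]
  rw [sum_range_fejerWeight_mul_eC n hdvd hL hH hHL, norm_mul, norm_div, Complex.norm_natCast,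
    Complex.norm_natCast]

-- The modulus `8 * (N * N!)` is a multiple of every denominator up to `N`, so that the weight sees
-- only complete sums.
lemma norm_sum_fejerWeight_factorial_mul_eC_mul_conj (n : ℕ) {r s : ℚ} (hden : (r - s).den ≤ N) :
    ‖∑ x ∈ Finset.range (8 * (N * N.factorial)),
      fejerWeight N.factorial (8 * (N * N.factorial)) x *
        (eC (r * (x : ℝ) ^ n) * (starRingEnd ℂ) (eC (s * (x : ℝ) ^ n)))‖ =
      8 * N * ‖completeSum n (r - s)‖ := by
  have hN : 0 < N := (r - s).pos.trans_le hden
  have hH : 0 < N.factorial := N.factorial_pos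
  have hdvd : (r - s).den ∣ 8 * (N * N.factorial) :=
    ((Nat.dvd_factorial (r - s).pos hden).mul_left N).mul_left 8
  have hle : N.factorial * (r - s).den ≤ 8 * (N * N.factorial) := by
    have := Nat.mul_le_mul_left N.factorial hden
    rw [mul_comm N]
    omega
  rw [norm_sum_fejerWeight_mul_eC_mul_conj n hdvd (by positivity) hH hle]
  push_cast
  field_simp

lemma sq_sum_norm_weightedWeylSum_le (n : ℕ) (hR : ∀ r ∈ R, ∀ s ∈ R, (r - s).den ≤ N)
    (hc : ∀ x, ‖c x‖ ≤ 1) :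
    (∑ r ∈ R, ‖weightedWeylSum n N c r‖) ^ 2 ≤
      32 * N ^ 2 * ∑ r ∈ R, ∑ s ∈ R, ‖completeSum n (r - s)‖ := by
  obtain rfl | ⟨r₀, hr₀⟩ := R.eq_empty_or_nonempty
  · simp
  have hN : 0 < N := (r₀ - r₀).pos.trans_le (hR r₀ hr₀ r₀ hr₀)
  have hN₁ : (1 : ℝ) ≤ N := mod_cast hN
  set H := N.factorial
  set L := 8 * (N * H) with hLdef
  have hH : 0 < H := N.factorial_pos
  have subset : Finset.range (N + 1) ⊆ Finset.range L := by
    refine Finset.range_subset_range.2 ?_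
    have := Nat.le_mul_of_pos_right N hH
    omega
  have weight_ge (x : ℕ) (hx : x ∈ Finset.range (N + 1)) : 1 / 2 ≤ fejerWeight H L x := by
    refine half_le_fejerWeight hH ?_
    rw [hLdef, mul_comm N]
    gcongr
    exact Finset.mem_range_succ_iff.1 hx
  have duality := mul_sq_sum_norm_sum_mul_le (R := R) hc subset (fejerWeight_nonneg H L)
    (by norm_num) weight_ge fun r x => eC (r * (x : ℝ) ^ n)
  rw [Finset.sum_congr rfl fun r hr => Finset.sum_congr rfl fun s hs =>
    norm_sum_fejerWeight_factorial_mul_eC_mul_conj n (hR r hr s hs), Finset.card_range] at duality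
  calc (∑ r ∈ R, ‖weightedWeylSum n N c r‖) ^ 2
      = 2 * (1 / 2 * (∑ r ∈ R, ‖weightedWeylSum n N c r‖) ^ 2) := by ring
    _ ≤ 2 * ((N + 1 : ℕ) * ∑ r ∈ R, ∑ s ∈ R, 8 * N * ‖completeSum n (r - s)‖) := by
        exact mul_le_mul_of_nonneg_left duality zero_le_two
    _ ≤ 2 * ((2 * N) * ∑ r ∈ R, ∑ s ∈ R, 8 * N * ‖completeSum n (r - s)‖) := by
        gcongr
        push_cast
        linarith
    _ = _ := by
        simp only [← Finset.mul_sum]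
        ring

lemma card_filter_den_sub_le (hR : ∀ r ∈ R, r ∈ Set.Icc 0 1) {r : ℚ} (hr : r ∈ Set.Icc 0 1)
    (D : ℕ) : (R.filter fun s => (r - s).den ≤ D).card ≤ 3 * D ^ 2 := by
  obtain rfl | hD := Nat.eq_zero_or_pos D
  · simp
  have card_le : (R.filter fun s => (r - s).den ≤ D).card ≤
      (Finset.Icc (-D : ℤ) D ×ˢ Finset.Icc 1 D).card := by
    refine Finset.card_le_card_of_injOn (fun s => ((r - s).num, (r - s).den)) (fun s hs => ?_)
      fun s _ t _ hst => ?_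
    · obtain ⟨hsR, hsD⟩ := Finset.mem_filter.1 (Finset.mem_coe.1 hs)
      obtain ⟨hs₀, hs₁⟩ := hR s hsR
      have hpos : (0 : ℚ) < (r - s).den := mod_cast (r - s).pos
      have abs_le_one : |r - s| ≤ 1 := abs_le.2 ⟨by linarith [hr.1], by linarith [hr.2]⟩
      have abs_num_le : |(r - s).num| ≤ (r - s).den := by
        rw [← Rat.num_div_den (r - s), abs_div, Nat.abs_cast, div_le_one hpos] at abs_le_one
        exact_mod_cast abs_le_one
      rw [abs_le] at abs_num_le
      have := (r - s).pos
      simp only [Finset.coe_product, Set.mem_prod, Finset.mem_coe, Finset.mem_Icc]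
      omega
    · obtain ⟨hnum, hden⟩ := Prod.mk.inj hst
      exact sub_right_injective (Rat.ext hnum hden)
  refine card_le.trans ?_
  rw [Finset.card_product, Int.card_Icc, Nat.card_Icc,
    show ((D : ℤ) + 1 - -D).toNat = 2 * D + 1 by omega, Nat.add_sub_cancel]
  nlinarith

lemma sum_norm_completeSum_sub_le (n : ℕ) (hR : ∀ r ∈ R, r ∈ Set.Icc 0 1) {r : ℚ}
    (hr : r ∈ Set.Icc 0 1) {D : ℕ} {ε : ℝ}
    (hε : ∀ s : ℚ, D ≤ s.den → ‖completeSum n s‖ ≤ ε) :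
    ∑ s ∈ R, ‖completeSum n (r - s)‖ ≤ 3 * D ^ 2 + R.card * ε := by
  have hε₀ : 0 ≤ ε := (norm_nonneg _).trans <| hε ((D + 1 : ℕ) : ℚ)⁻¹ <| by
    rw [Rat.inv_natCast_den_of_pos D.succ_pos]
    exact D.le_succ
  rw [← Finset.sum_filter_add_sum_filter_not R fun s => (r - s).den ≤ D]
  refine add_le_add ?_ ?_
  · calc _ ≤ ∑ _ ∈ R.filter fun s => (r - s).den ≤ D, (1 : ℝ) :=
          Finset.sum_le_sum fun _ _ => norm_completeSum_le_one n _
      _ = (R.filter fun s => (r - s).den ≤ D).card := by rw [Finset.sum_const, nsmul_one]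
      _ ≤ _ := mod_cast card_filter_den_sub_le hR hr D
  · calc _ ≤ ∑ _ ∈ R.filter fun s => ¬(r - s).den ≤ D, ε :=
          Finset.sum_le_sum fun _ hs => hε _ (not_le.1 (Finset.mem_filter.1 hs).2).le
      _ = (R.filter fun s => ¬(r - s).den ≤ D).card * ε := by rw [Finset.sum_const, nsmul_eq_mul]
      _ ≤ _ := by
          gcongr
          exact Finset.filter_subset _ _

lemma exists_completeSum_le_of_le_den (hn : 2 ≤ n) : ∃ C > (0 : ℝ), ∀ ε > (0 : ℝ), ε ≤ 1 →
    ∃ D : ℕ, D ≤ C / ε ^ (2 * n) ∧ ∀ r : ℚ, D ≤ r.den → ‖completeSum n r‖ ≤ ε := by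
  obtain ⟨C, hC, decay⟩ := exists_norm_completeSum_le_rpow hn
  refine ⟨2 * C ^ (2 * n), by positivity, fun ε hε₀ hε₁ => ?_⟩
  have hbase : 1 ≤ C / ε := (one_le_div hε₀).2 (hε₁.trans hC)
  refine ⟨⌈(C / ε) ^ (2 * n)⌉₊, ?_, fun r hr => ?_⟩
  · have h₁ := Nat.ceil_lt_add_one (a := (C / ε) ^ (2 * n)) (by positivity)
    have h₂ : 1 ≤ (C / ε) ^ (2 * n) := one_le_pow₀ hbase
    rw [mul_div_assoc, ← div_pow]
    linarith
  calc ‖completeSum n r‖ ≤ C * (r.den : ℝ) ^ (-(1 / (2 * n)) : ℝ) := decay r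
    _ ≤ C * ((C / ε) ^ (2 * n)) ^ (-(1 / (2 * n)) : ℝ) := by
        gcongr C * ?_
        refine Real.rpow_le_rpow_of_nonpos (by positivity) ((Nat.le_ceil _).trans ?_) ?_
        · exact_mod_cast hr
        · rw [neg_nonpos]
          positivity
    _ = C * (C / ε)⁻¹ := by
        rw [← Real.rpow_natCast, ← Real.rpow_mul (by positivity), ← Real.rpow_neg_one]
        congr 2
        push_cast
        field_simp
    _ = ε := by field_simp

lemma sq_mul_card_le_of_large (hden : ∀ r ∈ R, r.den ^ 2 ≤ N) (hR : ∀ r ∈ R, r ∈ Set.Icc 0 1)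
    (hc : ∀ x, ‖c x‖ ≤ 1) {l ε : ℝ} (hl : 0 ≤ l)
    (large : ∀ r ∈ R, l * N ≤ ‖weightedWeylSum n N c r‖) {D : ℕ}
    (hε : ∀ s : ℚ, D ≤ s.den → ‖completeSum n s‖ ≤ ε) :
    (l * R.card) ^ 2 ≤ 32 * (R.card * (3 * D ^ 2 + R.card * ε)) := by
  obtain rfl | ⟨r₀, hr₀⟩ := R.eq_empty_or_nonempty
  · simp
  have hN : (0 : ℝ) < N := mod_cast (pow_pos r₀.pos 2).trans_le (hden r₀ hr₀)
  have den_sub_le (r : ℚ) (hr : r ∈ R) (s : ℚ) (hs : s ∈ R) : (r - s).den ≤ N := by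
    have hdvd := Nat.le_of_dvd (Nat.mul_pos r.pos s.pos) (Rat.sub_den_dvd r s)
    nlinarith [hden r hr, hden s hs, sq_nonneg ((r.den : ℤ) - s.den)]
  refine le_of_mul_le_mul_left ?_ (pow_pos hN 2)
  calc (N : ℝ) ^ 2 * (l * R.card) ^ 2 = (∑ _ ∈ R, l * N) ^ 2 := by
        rw [Finset.sum_const, nsmul_eq_mul]
        ring
    _ ≤ (∑ r ∈ R, ‖weightedWeylSum n N c r‖) ^ 2 := by
        gcongr with r hr
        exact large r hr
    _ ≤ 32 * N ^ 2 * ∑ r ∈ R, ∑ s ∈ R, ‖completeSum n (r - s)‖ :=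
        sq_sum_norm_weightedWeylSum_le n den_sub_le hc
    _ ≤ 32 * N ^ 2 * ∑ r ∈ R, (3 * D ^ 2 + R.card * ε) := by
        gcongr with r hr
        exact sum_norm_completeSum_sub_le n hR (hR r hr) hε
    _ = _ := by
        rw [Finset.sum_const, nsmul_eq_mul]
        ring

-- By duality the sums are controlled by `completeSum n (r - s)`, which is small unless `r - s` has
-- small denominator, and for given `r` this happens for few `s`.
lemma exists_card_le_div_pow (hn : 2 ≤ n) : ∃ C > (0 : ℝ), ∀ {N : ℕ} {R : Finset ℚ} {c : ℕ → ℂ}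
    {l : ℝ}, (∀ r ∈ R, r.den ^ 2 ≤ N) → (∀ r ∈ R, r ∈ Set.Icc 0 1) → (∀ x, ‖c x‖ ≤ 1) →
    0 < l → l ≤ 1 → (∀ r ∈ R, l * N ≤ ‖weightedWeylSum n N c r‖) →
    (R.card : ℝ) ≤ C / l ^ (8 * n + 2) := by
  obtain ⟨C, hC, small⟩ := exists_completeSum_le_of_le_den hn
  refine ⟨192 * (C * 64 ^ (2 * n)) ^ 2, by positivity, ?_⟩
  intro N R c l hden hR hc hl hl₁ large
  obtain rfl | ⟨r₀, hr₀⟩ := R.eq_empty_or_nonempty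
  · rw [Finset.card_empty, Nat.cast_zero]
    positivity
  have hcard : (0 : ℝ) < R.card := mod_cast Finset.card_pos.2 ⟨r₀, hr₀⟩
  have hl₂ : l ^ 2 ≤ 1 := pow_le_one₀ hl.le hl₁
  obtain ⟨D, hD, hsmall⟩ := small (l ^ 2 / 64) (by positivity) (by linarith)
  have card_le : l ^ 2 * R.card ≤ 192 * D ^ 2 := by
    have := sq_mul_card_le_of_large hden hR hc hl.le large hsmall
    refine le_of_mul_le_mul_left ?_ hcard
    linarith
  rw [le_div_iff₀ (by positivity)]
  calc R.card * l ^ (8 * n + 2) = l ^ 2 * R.card * l ^ (8 * n) := by ring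
    _ ≤ 192 * (C / (l ^ 2 / 64) ^ (2 * n)) ^ 2 * l ^ (8 * n) := by
        refine mul_le_mul_of_nonneg_right (card_le.trans ?_) (by positivity)
        gcongr
    _ = 192 * (C * 64 ^ (2 * n)) ^ 2 := by
        rw [div_pow (l ^ 2), div_div_eq_mul_div, div_pow, ← pow_mul, ← pow_mul,
          show 2 * (2 * n * 2) = 8 * n by ring]
        field_simp

end LargeValues

/-! ### Sums over rationals in the unit interval -/

section UnitRationals

variable {R : Finset ℚ}

lemma card_filter_den_eq_le (hR : ∀ r ∈ R, r ∈ Set.Icc 0 1) (d : ℕ) :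
    (R.filter fun r => r.den = d).card ≤ 2 * d := by
  obtain rfl | hd := Nat.eq_zero_or_pos d
  · rw [Finset.filter_false_of_mem fun r _ => r.den_ne_zero, Finset.card_empty]
  calc (R.filter fun r => r.den = d).card ≤ (Finset.Icc (0 : ℤ) d).card := by
        refine Finset.card_le_card_of_injOn Rat.num (fun r hr => ?_) fun r hr s hs hrs => ?_
        · obtain ⟨hrR, rfl⟩ := Finset.mem_filter.1 hr
          exact Finset.mem_coe.2 <| Finset.mem_Icc.2
            ⟨Rat.num_nonneg.2 (hR r hrR).1, Rat.num_le_denom_iff.2 (hR r hrR).2⟩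
        · exact Rat.ext hrs ((Finset.mem_filter.1 hr).2.trans (Finset.mem_filter.1 hs).2.symm)
    _ ≤ 2 * d := by
        rw [Int.card_Icc]
        omega

lemma sum_comp_den_le (hR : ∀ r ∈ R, r ∈ Set.Icc 0 1) {T : Finset ℕ} (hT : ∀ r ∈ R, r.den ∈ T)
    {F : ℕ → ℝ} (hF : ∀ d, 0 ≤ F d) : ∑ r ∈ R, F r.den ≤ 2 * ∑ d ∈ T, d * F d := by
  rw [← Finset.sum_fiberwise_of_maps_to' hT, Finset.mul_sum]
  refine Finset.sum_le_sum fun d _ => ?_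
  rw [Finset.sum_const, nsmul_eq_mul, ← mul_assoc]
  exact mul_le_mul_of_nonneg_right (mod_cast card_filter_den_eq_le hR d) (hF d)

lemma sum_le_two_mul_sum_range_div (hR : ∀ r ∈ R, r ∈ Set.Icc 0 1) {q : ℕ} (hq : 0 < q)
    (hden : ∀ r ∈ R, r.den = q) {F : ℚ → ℝ} (hF : ∀ r, 0 ≤ F r) (hF₁ : F 1 = F 0) :
    ∑ r ∈ R, F r ≤ 2 * ∑ a ∈ Finset.range q, F (a / q) := by
  have mem_image : R ⊆ (Finset.range (q + 1)).image fun a : ℕ => (a : ℚ) / q := fun r hr => by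
    have h₀ := Rat.num_nonneg.2 (hR r hr).1
    have h₁ := Rat.num_le_denom_iff.2 (hR r hr).2
    have hcast : ((r.num.toNat : ℕ) : ℚ) = r.num := mod_cast Int.toNat_of_nonneg h₀
    rw [hden r hr] at h₁
    refine Finset.mem_image.2 ⟨r.num.toNat, Finset.mem_range.2 (by omega), ?_⟩
    rw [hcast, ← hden r hr, Rat.num_div_den]
  have hq₀ : (q : ℚ) ≠ 0 := Nat.cast_ne_zero.2 hq.ne'
  calc ∑ r ∈ R, F r ≤ ∑ r ∈ (Finset.range (q + 1)).image fun a : ℕ => (a : ℚ) / q, F r :=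
        Finset.sum_le_sum_of_subset_of_nonneg mem_image fun r _ _ => hF r
    _ ≤ ∑ a ∈ Finset.range (q + 1), F (a / q) :=
        Finset.sum_image_le_of_nonneg fun a _ => hF _
    _ = ∑ a ∈ Finset.range q, F (a / q) + F ((0 : ℕ) / q) := by
        rw [Finset.sum_range_succ, div_self hq₀, hF₁, Nat.cast_zero, zero_div]
    _ ≤ 2 * ∑ a ∈ Finset.range q, F (a / q) := by
        rw [two_mul]
        gcongr
        exact Finset.single_le_sum (f := fun a : ℕ => F (a / q)) (fun a _ => hF _)
          (Finset.mem_range.2 hq)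

end UnitRationals

/-! ### Even moments over a fixed denominator -/

section EvenMoments

variable {N : ℕ} {c : ℕ → ℂ}

lemma weightedWeylSum_one (n N : ℕ) (c : ℕ → ℂ) :
    weightedWeylSum n N c 1 = weightedWeylSum n N c 0 := by
  refine Finset.sum_congr rfl fun x _ => ?_
  rw [one_mul, zero_mul, eC_zero, eC_eq_one_iff.2 ⟨(x : ℤ) ^ n, by push_cast; rfl⟩]

lemma den_natCast_div_dvd (a q : ℕ) : ((a : ℚ) / q).den ∣ q := by
  have h := Rat.den_dvd a q
  rwa [Int.natCast_dvd_natCast, Rat.divInt_eq_div, Int.cast_natCast, Int.cast_natCast] at h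

lemma stdAddChar_natCast_mul_pow (n : ℕ) {q : ℕ} [NeZero q] (a x : ℕ) :
    ZMod.stdAddChar ((a : ZMod q) * (x : ZMod q) ^ n) = eC (((a / q : ℚ) : ℝ) * (x : ℝ) ^ n) := by
  have h := stdAddChar_intCast_eq_eC q (a * x ^ n : ℕ)
  push_cast at h ⊢
  rw [h]
  ring_nf

lemma weightedWeylSum_natCast_div (n : ℕ) {q : ℕ} [NeZero q] {M : ℕ} (hM : N < M) (a : ℕ) :
    weightedWeylSum n N c ((a / q : ℚ) : ℝ) = ∑ x ∈ Finset.range M,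
      (if x ≤ N then c x else 0) * ZMod.stdAddChar ((a : ZMod q) * (x : ZMod q) ^ n) := by
  simp only [stdAddChar_natCast_mul_pow, ite_mul, zero_mul, ← Finset.sum_filter]
  refine Finset.sum_congr (Finset.ext fun x => ?_) fun _ _ => rfl
  rw [Finset.mem_filter, Finset.mem_range, Finset.mem_range]
  omega

-- Extend `c` by zero to a whole number of periods and replace every coefficient by `1`.
lemma sum_norm_weightedWeylSum_pow_le (n k : ℕ) {q : ℕ} (hq : 0 < q) (hqN : q ≤ N)
    (hc : ∀ x, ‖c x‖ ≤ 1) :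
    ∑ a ∈ Finset.range q, ‖weightedWeylSum n N c ((a / q : ℚ) : ℝ)‖ ^ (2 * k) ≤
      (2 * N) ^ (2 * k) * ∑ a ∈ Finset.range q, ‖completeSum n (a / q)‖ ^ (2 * k) := by
  have : NeZero q := ⟨hq.ne'⟩
  set M := q * (N / q + 1) with hM
  have hNM : N < M := Nat.lt_mul_div_succ N hq
  have hM_le : M ≤ 2 * N := by
    have := Nat.mul_div_le N q
    rw [hM, mul_add]
    omega
  have complete (a : ℕ) : ∑ x ∈ Finset.range M,
      ZMod.stdAddChar ((a : ZMod q) * (x : ZMod q) ^ n) = M * completeSum n (a / q) := by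
    simp only [stdAddChar_natCast_mul_pow]
    exact sum_range_eC_mul_pow n ((den_natCast_div_dvd a q).mul_right _)
  simp only [weightedWeylSum_natCast_div n hNM]
  rw [sum_range_natCast_zmod q fun a => ‖∑ x ∈ Finset.range M,
    (if x ≤ N then c x else 0) * ZMod.stdAddChar (a * (x : ZMod q) ^ n)‖ ^ (2 * k)]
  refine (sum_norm_pow_sum_mul_addChar_le (ZMod.isPrimitive_stdAddChar q) k _ _
    fun x _ => ?_).trans ?_
  · split_ifs
    exacts [hc x, norm_zero.trans_le zero_le_one]
  rw [← sum_range_natCast_zmod q]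
  simp only [complete, norm_mul, Complex.norm_natCast, mul_pow (M : ℝ), ← Finset.mul_sum]
  gcongr
  exact_mod_cast hM_le

lemma exists_norm_completeSum_pow_four_le {n : ℕ} (hn : 2 ≤ n) (hn₄ : n ≤ 4) {ε : ℝ} (hε : 0 < ε) :
    ∃ C > 0, ∀ r : ℚ, ‖completeSum n r‖ ^ 4 ≤ C * (r.den : ℝ) ^ (-1 + ε) := by
  obtain ⟨C, hC, majorant_le⟩ := exists_completeSumMajorant_le_rpow hn (half_pos hε)
  refine ⟨C ^ 2, by positivity, fun r => ?_⟩
  have hn₀ : (0 : ℝ) < n := mod_cast (by omega : 0 < n)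
  have hden : (1 : ℝ) ≤ r.den := mod_cast r.pos
  have exponent_le : 2 * (-(2 / n : ℝ) + ε / 2) ≤ -1 + ε := by
    have : 1 ≤ 4 / (n : ℝ) := (one_le_div hn₀).2 (mod_cast hn₄)
    linarith [show 2 * (2 / (n : ℝ)) = 4 / n by ring]
  calc ‖completeSum n r‖ ^ 4 = (‖completeSum n r‖ ^ 2) ^ 2 := by ring
    _ ≤ (C * (r.den : ℝ) ^ (-(2 / n : ℝ) + ε / 2)) ^ 2 := by
        gcongr
        exact (norm_completeSum_sq_le_completeSumMajorant n r).trans (majorant_le _ r.den_ne_zero)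
    _ = C ^ 2 * (r.den : ℝ) ^ (2 * (-(2 / n : ℝ) + ε / 2)) := by
        rw [mul_pow, mul_comm 2, Real.rpow_mul (by positivity), Real.rpow_two]
    _ ≤ _ := by gcongr

lemma exists_sum_norm_completeSum_pow_four_le {n : ℕ} (hn : 2 ≤ n) (hn₄ : n ≤ 4) {ε : ℝ}
    (hε : 0 < ε) : ∃ C > 0, ∀ {q : ℕ}, 0 < q →
      ∑ a ∈ Finset.range q, ‖completeSum n (a / q)‖ ^ 4 ≤ C * (q.divisors.card * (q : ℝ) ^ ε) := by
  obtain ⟨C, hC, pointwise⟩ := exists_norm_completeSum_pow_four_le hn hn₄ hε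
  refine ⟨C * 2, by positivity, fun {q} hq => ?_⟩
  have hq₀ : (0 : ℚ) < q := mod_cast hq
  have injective : Set.InjOn (fun a : ℕ => (a : ℚ) / q) (Finset.range q) := fun a _ b _ hab => by
    exact_mod_cast (div_left_inj' hq₀.ne').1 hab
  calc ∑ a ∈ Finset.range q, ‖completeSum n (a / q)‖ ^ 4
      ≤ C * ∑ r ∈ (Finset.range q).image fun a : ℕ => (a : ℚ) / q,
          (r.den : ℝ) ^ (-1 + ε) := by
        rw [Finset.sum_image injective, Finset.mul_sum]
        exact Finset.sum_le_sum fun a _ => pointwise _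
    _ ≤ C * (2 * ∑ d ∈ q.divisors, d * (d : ℝ) ^ (-1 + ε)) := by
        gcongr
        refine sum_comp_den_le (F := fun d => (d : ℝ) ^ (-1 + ε)) ?_ ?_ fun d => by positivity
        all_goals
          intro r hr
          obtain ⟨a, ha, rfl⟩ := Finset.mem_image.1 hr
        · exact ⟨by positivity,
            (div_le_one hq₀).2 (mod_cast (Finset.mem_range.1 ha).le)⟩
        · exact Nat.mem_divisors.2 ⟨den_natCast_div_dvd a q, hq.ne'⟩
    _ ≤ C * (2 * ∑ _ ∈ q.divisors, (q : ℝ) ^ ε) := by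
        gcongr with d hd
        have hd₀ : (0 : ℝ) < d := mod_cast Nat.pos_of_mem_divisors hd
        rw [← Real.rpow_one_add' hd₀.le (by linarith), add_neg_cancel_left]
        gcongr
        exact Nat.divisor_le hd
    _ = _ := by
        rw [Finset.sum_const, nsmul_eq_mul]
        ring

lemma exists_sum_norm_weightedWeylSum_pow_four_le {n : ℕ} (hn : 2 ≤ n) (hn₄ : n ≤ 4) {ε : ℝ}
    (hε : 0 < ε) : ∃ C > 0, ∀ {N q : ℕ} {c : ℕ → ℂ} {R : Finset ℚ}, 0 < q → q ≤ N →
      (∀ r ∈ R, r ∈ Set.Icc 0 1) → (∀ r ∈ R, r.den = q) → (∀ x, ‖c x‖ ≤ 1) →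
      ∑ r ∈ R, ‖weightedWeylSum n N c r‖ ^ 4 ≤
        C * N ^ 4 * (q.divisors.card * (q : ℝ) ^ ε) := by
  obtain ⟨C, hC, complete_le⟩ := exists_sum_norm_completeSum_pow_four_le hn hn₄ hε
  refine ⟨32 * C, by positivity, fun {N q c R} hq hqN hR hden hc => ?_⟩
  calc ∑ r ∈ R, ‖weightedWeylSum n N c r‖ ^ 4
      ≤ 2 * ∑ a ∈ Finset.range q, ‖weightedWeylSum n N c ((a / q : ℚ) : ℝ)‖ ^ 4 :=
        sum_le_two_mul_sum_range_div (F := fun r => ‖weightedWeylSum n N c r‖ ^ 4) hR hq hden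
          (fun r => by positivity) (by rw [Rat.cast_one, Rat.cast_zero, weightedWeylSum_one])
    _ ≤ 2 * ((2 * N) ^ 4 * ∑ a ∈ Finset.range q, ‖completeSum n (a / q)‖ ^ 4) := by
        gcongr
        exact sum_norm_weightedWeylSum_pow_le n 2 hq hqN hc
    _ ≤ 2 * ((2 * N) ^ 4 * (C * (q.divisors.card * (q : ℝ) ^ ε))) := by
        gcongr
        exact complete_le hq
    _ = _ := by ring

end EvenMoments

/-! ### The arithmetic mean value -/

lemma sum_filter_log_eq_rpow_neg_le {θ σ : ℝ} (hσ : 0 ≤ σ) {ι : Type*} {s : Finset ι} {f : ι → ℕ}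
    {A : ℝ} (hf : ∀ i ∈ s, f i ≠ 0)
    (count : ∀ X : ℝ, 1 ≤ X → (s.filter fun i => f i ≤ X).card ≤ A * X ^ θ) (j : ℕ) :
    ∑ i ∈ s.filter fun i => Nat.log 2 (f i) = j, (f i : ℝ) ^ (-σ) ≤
      A * 2 ^ θ * (2 ^ (θ - σ)) ^ j := by
  set X : ℝ := 2 ^ j with hX
  have hX₁ : 1 ≤ X := one_le_pow₀ one_le_two
  have hX₀ : 0 < X := by linarith
  have card_le : ((s.filter fun i => Nat.log 2 (f i) = j).card : ℝ) ≤ A * (2 * X) ^ θ := by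
    refine le_trans (mod_cast Finset.card_le_card fun i hi => ?_) (count (2 * X) (by linarith))
    obtain ⟨his, rfl⟩ := Finset.mem_filter.1 hi
    refine Finset.mem_filter.2 ⟨his, ?_⟩
    rw [hX, ← pow_succ']
    exact_mod_cast (Nat.lt_pow_succ_log_self one_lt_two (f i)).le
  calc _ ≤ (s.filter fun i => Nat.log 2 (f i) = j).card • X ^ (-σ) := by
        refine Finset.sum_le_card_nsmul _ _ _ fun i hi => ?_
        obtain ⟨his, rfl⟩ := Finset.mem_filter.1 hi
        refine Real.rpow_le_rpow_of_nonpos hX₀ ?_ (neg_nonpos.2 hσ)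
        rw [hX]
        exact_mod_cast Nat.pow_log_le_self 2 (hf i his)
    _ ≤ A * (2 * X) ^ θ * X ^ (-σ) := by
        rw [nsmul_eq_mul]
        gcongr
    _ = _ := by
        rw [Real.mul_rpow zero_le_two hX₀.le, ← mul_assoc, mul_assoc, ← Real.rpow_add hX₀,
          ← sub_eq_add_neg, Real.rpow_pow_comm zero_le_two]

lemma exists_sum_rpow_neg_le {θ σ : ℝ} (hθ : 0 ≤ θ) (hθσ : θ < σ) :
    ∃ C > 0, ∀ {ι : Type} {s : Finset ι} {f : ι → ℕ} {A : ℝ}, (∀ i ∈ s, f i ≠ 0) → 0 ≤ A →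
      (∀ X : ℝ, 1 ≤ X → (s.filter fun i => f i ≤ X).card ≤ A * X ^ θ) →
      ∑ i ∈ s, (f i : ℝ) ^ (-σ) ≤ C * A := by
  set ρ : ℝ := 2 ^ (θ - σ)
  have hρ : ρ < 1 := Real.rpow_lt_one_of_one_lt_of_neg one_lt_two (by linarith)
  have : 0 < 1 - ρ := sub_pos.2 hρ
  refine ⟨2 ^ θ * (1 - ρ)⁻¹, by positivity, fun {ι s f A} hf hA count => ?_⟩
  calc ∑ i ∈ s, (f i : ℝ) ^ (-σ)
      = ∑ j ∈ s.image fun i => Nat.log 2 (f i),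
          ∑ i ∈ s.filter fun i => Nat.log 2 (f i) = j, (f i : ℝ) ^ (-σ) :=
        (Finset.sum_fiberwise_of_maps_to (fun _ => Finset.mem_image_of_mem _) _).symm
    _ ≤ ∑ j ∈ s.image fun i => Nat.log 2 (f i), A * 2 ^ θ * ρ ^ j :=
        Finset.sum_le_sum fun j _ =>
          sum_filter_log_eq_rpow_neg_le (hθ.trans hθσ.le) hf count j
    _ ≤ A * 2 ^ θ * (1 - ρ)⁻¹ := by
        rw [← Finset.mul_sum, ← tsum_geometric_of_lt_one (by positivity) hρ]
        gcongr
        exact (summable_geometric_of_lt_one (by positivity) hρ).sum_le_tsum _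
          fun j _ => by positivity
    _ = _ := by ring

section MeanValue

variable {n : ℕ}

lemma norm_weightedWeylSum_le (n : ℕ) {N : ℕ} (hN : 0 < N) {c : ℕ → ℂ} (hc : ∀ x, ‖c x‖ ≤ 1)
    (α : ℝ) : ‖weightedWeylSum n N c α‖ ≤ 2 * N := by
  calc ‖weightedWeylSum n N c α‖ ≤ ∑ _ ∈ Finset.range (N + 1), 1 :=
        norm_sum_le_of_le _ fun x _ => by
          rw [norm_mul, norm_eC, mul_one]
          exact hc x
    _ ≤ 2 * N := by
        rw [Finset.sum_const, Finset.card_range, nsmul_one]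
        exact_mod_cast (by omega : N + 1 ≤ 2 * N)

/-- The mean value `∑_{r ∈ R} |S(r)|² |G(r)|⁶`, where `S` is the normalised complete sum and `G` the
weighted Weyl sum of degree `n`. -/
noncomputable def completeSumMeanValue (n N : ℕ) (c : ℕ → ℂ) (R : Finset ℚ) : ℝ :=
  ∑ r ∈ R, ‖completeSum n r‖ ^ 2 * ‖weightedWeylSum n N c r‖ ^ 6

lemma exists_completeSumMeanValue_le_of_small_of_den_eq (hn : 2 ≤ n) (hn₄ : n ≤ 4) {ε : ℝ}
    (hε : 0 < ε) : ∃ C > 0, ∀ {N q : ℕ} {R : Finset ℚ} {c : ℕ → ℂ}, 0 < q → q ≤ N →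
      (∀ r ∈ R, r ∈ Set.Icc 0 1) → (∀ r ∈ R, r.den = q) → (∀ x, ‖c x‖ ≤ 1) →
      (∀ r ∈ R, ‖weightedWeylSum n N c r‖ ≤ N * (r.den : ℝ) ^ (-ε)) →
      completeSumMeanValue n N c R ≤
        C * N ^ 6 * (completeSumMajorant n q * q.divisors.card * (q : ℝ) ^ (-ε)) := by
  obtain ⟨C, hC, moment⟩ := exists_sum_norm_weightedWeylSum_pow_four_le hn hn₄ hε
  refine ⟨C, hC, fun {N q R c} hq hqN hR hden hc small => ?_⟩
  have hq₀ : (0 : ℝ) < q := mod_cast hq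
  have := completeSumMajorant_nonneg n q
  calc completeSumMeanValue n N c R
      ≤ ∑ r ∈ R, completeSumMajorant n q * (N * (q : ℝ) ^ (-ε)) ^ 2 *
          ‖weightedWeylSum n N c r‖ ^ 4 := by
        refine Finset.sum_le_sum fun r hr => ?_
        obtain rfl := hden r hr
        rw [show 6 = 2 + 4 from rfl, pow_add, ← mul_assoc]
        gcongr
        · exact norm_completeSum_sq_le_completeSumMajorant n r
        · exact small r hr
    _ ≤ completeSumMajorant n q * (N * (q : ℝ) ^ (-ε)) ^ 2 *
          (C * N ^ 4 * (q.divisors.card * (q : ℝ) ^ ε)) := by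
        rw [← Finset.mul_sum]
        gcongr
        exact moment hq hqN hR hden hc
    _ = C * N ^ 6 * (completeSumMajorant n q * q.divisors.card *
          (((q : ℝ) ^ (-ε) * (q : ℝ) ^ ε) * (q : ℝ) ^ (-ε))) := by ring
    _ = _ := by rw [← Real.rpow_add hq₀, neg_add_cancel, Real.rpow_zero, one_mul]

lemma exists_completeSumMeanValue_le_of_small (hn : 2 ≤ n) (hn₄ : n ≤ 4) {ε : ℝ} (hε : 0 < ε) :
    ∃ C > 0, ∀ {N : ℕ} {R : Finset ℚ} {c : ℕ → ℂ}, (∀ r ∈ R, r.den ≤ N) →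
      (∀ r ∈ R, r ∈ Set.Icc 0 1) → (∀ x, ‖c x‖ ≤ 1) →
      (∀ r ∈ R, ‖weightedWeylSum n N c r‖ ≤ N * (r.den : ℝ) ^ (-ε)) →
      completeSumMeanValue n N c R ≤ C * N ^ 6 := by
  obtain ⟨C, hC, fiber⟩ := exists_completeSumMeanValue_le_of_small_of_den_eq hn hn₄ hε
  set F : ℕ → ℝ := fun q => completeSumMajorant n q * q.divisors.card * (q : ℝ) ^ (-ε)
  have hF : Summable F := summable_completeSumMajorant_mul_card_divisors hn hn₄ hε
  have hF₀ (q : ℕ) : 0 ≤ F q :=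
    mul_nonneg (mul_nonneg (completeSumMajorant_nonneg n q) (by positivity)) (by positivity)
  have hF₁ : 0 ≤ ∑' q, F q := tsum_nonneg hF₀
  refine ⟨C * (∑' q, F q + 1), by positivity, fun {N R c} hden hR hc small => ?_⟩
  calc completeSumMeanValue n N c R ≤ ∑ q ∈ Finset.Icc 1 N, C * N ^ 6 * F q := by
        rw [completeSumMeanValue, ← Finset.sum_fiberwise_of_maps_to (t := Finset.Icc 1 N)
          (g := Rat.den) fun r hr => Finset.mem_Icc.2 ⟨r.pos, hden r hr⟩]
        refine Finset.sum_le_sum fun q hq => ?_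
        obtain ⟨hq₀, hqN⟩ := Finset.mem_Icc.1 hq
        exact fiber hq₀ hqN (fun r hr => hR r (Finset.mem_filter.1 hr).1)
          (fun r hr => (Finset.mem_filter.1 hr).2) hc fun r hr => small r (Finset.mem_filter.1 hr).1
    _ ≤ C * N ^ 6 * (∑' q, F q + 1) := by
        rw [← Finset.mul_sum]
        gcongr
        exact (hF.sum_le_tsum _ fun q _ => hF₀ q).trans (by linarith)
    _ = _ := by ring

lemma exists_card_filter_le_rpow_of_large (hn : 2 ≤ n) {ε : ℝ} (hε : 0 ≤ ε) :
    ∃ C > 0, ∀ {N : ℕ} {R : Finset ℚ} {c : ℕ → ℂ}, (∀ r ∈ R, r.den ^ 2 ≤ N) →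
      (∀ r ∈ R, r ∈ Set.Icc 0 1) → (∀ x, ‖c x‖ ≤ 1) →
      (∀ r ∈ R, N * (r.den : ℝ) ^ (-ε) ≤ ‖weightedWeylSum n N c r‖) → ∀ X : ℝ, 1 ≤ X →
      (R.filter fun r => r.den ≤ X).card ≤ C * X ^ ((8 * n + 2) * ε) := by
  obtain ⟨C, hC, large_values⟩ := exists_card_le_div_pow hn
  refine ⟨C, hC, fun {N R c} hden hR hc large X hX => ?_⟩
  have hX₀ : 0 < X := by linarith
  calc _ ≤ C / (X ^ (-ε)) ^ (8 * n + 2) := by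
        refine large_values (fun r hr => hden r (Finset.mem_filter.1 hr).1)
          (fun r hr => hR r (Finset.mem_filter.1 hr).1) hc (by positivity)
          (Real.rpow_le_one_of_one_le_of_nonpos hX (by linarith)) fun r hr => ?_
        obtain ⟨hrR, hrX⟩ := Finset.mem_filter.1 hr
        refine le_trans ?_ (large r hrR)
        rw [mul_comm]
        gcongr ?_ * ?_
        exact Real.rpow_le_rpow_of_nonpos (mod_cast r.pos) hrX (by linarith)
    _ = _ := by
        rw [← Real.rpow_natCast, ← Real.rpow_mul hX₀.le, div_eq_mul_inv, ← Real.rpow_neg hX₀.le]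
        push_cast
        ring_nf

-- Large values occur at few rationals of each size, too few to offset the decay of `S`.
lemma exists_completeSumMeanValue_le_of_large (hn : 2 ≤ n) {ε : ℝ} (hε : 0 < ε)
    (hεn : (8 * n + 2) * ε < 2 / n) :
    ∃ C > 0, ∀ {N : ℕ} {R : Finset ℚ} {c : ℕ → ℂ}, (∀ r ∈ R, r.den ^ 2 ≤ N) →
      (∀ r ∈ R, r ∈ Set.Icc 0 1) → (∀ x, ‖c x‖ ≤ 1) →
      (∀ r ∈ R, N * (r.den : ℝ) ^ (-ε) ≤ ‖weightedWeylSum n N c r‖) →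
      completeSumMeanValue n N c R ≤ C * N ^ 6 := by
  obtain ⟨σ, hσ, hσn⟩ := exists_between hεn
  obtain ⟨C₁, hC₁, large_values⟩ := exists_card_filter_le_rpow_of_large hn hε.le
  obtain ⟨C₂, hC₂, majorant_le⟩ := exists_completeSumMajorant_le_rpow hn (sub_pos.2 hσn)
  obtain ⟨C₃, hC₃, sum_le⟩ := exists_sum_rpow_neg_le (by positivity) hσ
  refine ⟨2 ^ 6 * C₂ * (C₃ * C₁), by positivity, fun {N R c} hden hR hc large => ?_⟩
  have pointwise {r : ℚ} (hr : r ∈ R) : ‖completeSum n r‖ ^ 2 * ‖weightedWeylSum n N c r‖ ^ 6 ≤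
      2 ^ 6 * C₂ * N ^ 6 * (r.den : ℝ) ^ (-σ) := by
    have hN : 0 < N := (pow_pos r.pos 2).trans_le (hden r hr)
    calc _ ≤ C₂ * (r.den : ℝ) ^ (-(2 / n : ℝ) + (2 / n - σ)) * (2 * N) ^ 6 := by
          gcongr
          · exact (norm_completeSum_sq_le_completeSumMajorant n r).trans
              (majorant_le _ r.den_ne_zero)
          · exact norm_weightedWeylSum_le n hN hc r
      _ = _ := by
          rw [show -(2 / n : ℝ) + (2 / n - σ) = -σ by ring]
          ring
  calc completeSumMeanValue n N c R
      ≤ 2 ^ 6 * C₂ * N ^ 6 * ∑ r ∈ R, (r.den : ℝ) ^ (-σ) := by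
        rw [Finset.mul_sum]
        exact Finset.sum_le_sum fun r hr => pointwise hr
    _ ≤ 2 ^ 6 * C₂ * N ^ 6 * (C₃ * C₁) := by
        gcongr
        exact sum_le (fun r _ => r.den_ne_zero) hC₁.le (large_values hden hR hc large)
    _ = _ := by ring

lemma exists_completeSumMeanValue_le (hn : 2 ≤ n) (hn₄ : n ≤ 4) :
    ∃ C > 0, ∀ {N : ℕ} {R : Finset ℚ} {c : ℕ → ℂ}, (∀ r ∈ R, r.den ^ 2 ≤ N) →
      (∀ r ∈ R, r ∈ Set.Icc 0 1) → (∀ x, ‖c x‖ ≤ 1) →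
      completeSumMeanValue n N c R ≤ C * N ^ 6 := by
  have threshold : (8 * n + 2) * (1 / 100 : ℝ) < 2 / n := by
    interval_cases n <;> norm_num
  obtain ⟨C₁, hC₁, small⟩ :=
    exists_completeSumMeanValue_le_of_small hn hn₄ (ε := 1 / 100) (by norm_num)
  obtain ⟨C₂, hC₂, large⟩ :=
    exists_completeSumMeanValue_le_of_large hn (ε := 1 / 100) (by norm_num) threshold
  refine ⟨C₁ + C₂, by positivity, fun {N R c} hden hR hc => ?_⟩
  rw [completeSumMeanValue, ← Finset.sum_filter_add_sum_filter_not R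
    fun r => ‖weightedWeylSum n N c r‖ ≤ N * (r.den : ℝ) ^ (-(1 / 100) : ℝ),
    add_mul]
  have mem {p : ℚ → Prop} [DecidablePred p] {r : ℚ} (hr : r ∈ R.filter p) : r ∈ R :=
    (Finset.mem_filter.1 hr).1
  exact add_le_add
    (small (fun r hr => (Nat.le_self_pow two_ne_zero _).trans (hden r (mem hr)))
      (fun r hr => hR r (mem hr)) hc fun r hr => (Finset.mem_filter.1 hr).2)
    (large (fun r hr => hden r (mem hr)) (fun r hr => hR r (mem hr)) hc
      fun r hr => (not_le.1 (Finset.mem_filter.1 hr).2).le)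

end MeanValue

/-! ### Approximation on a major arc -/

section Approximation

variable (n : ℕ)

lemma norm_eC_sub_eC_le (x y : ℝ) : ‖eC x - eC y‖ ≤ 2 * Real.pi * |x - y| := by
  have factor : eC x - eC y = eC y * (eC (x - y) - 1) := by
    rw [mul_sub, ← eC_add, mul_one, add_sub_cancel]
  have bound := Real.norm_exp_I_mul_ofReal_sub_one_le (x := 2 * Real.pi * (x - y))
  rw [Real.norm_eq_abs, abs_mul, abs_of_pos Real.two_pi_pos] at bound
  rw [factor, norm_mul, norm_eC, one_mul, eC]
  convert bound using 4
  push_cast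
  ring

lemma continuous_eC : Continuous eC := by
  unfold eC
  fun_prop

lemma continuous_eC_mul_pow (β : ℝ) : Continuous fun t : ℝ => eC (β * t ^ n) :=
  continuous_eC.comp (by fun_prop)

lemma norm_integral_eC_mul_pow_le (β : ℝ) {a b : ℝ} (hab : a ≤ b) :
    ‖∫ t in a..b, eC (β * t ^ n)‖ ≤ b - a := by
  simpa [abs_of_nonneg (sub_nonneg.2 hab)] using
    intervalIntegral.norm_integral_le_of_norm_le_const (a := a) (b := b) (C := 1)
      fun t _ => (norm_eC (β * t ^ n)).le

lemma norm_mul_eC_sub_integral_le (β : ℝ) {u q T x : ℝ} (hu : 0 ≤ u) (hT : u + q ≤ T)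
    (hx : x ∈ Set.Icc u (u + q)) :
    ‖q * eC (β * x ^ n) - ∫ t in u..u + q, eC (β * t ^ n)‖ ≤
      q * (2 * Real.pi * n * |β| * q * T ^ (n - 1)) := by
  obtain ⟨hux, hxq⟩ := hx
  have hq : 0 ≤ q := by linarith
  have as_integral : q * eC (β * x ^ n) - ∫ t in u..u + q, eC (β * t ^ n) =
      ∫ t in u..u + q, (eC (β * x ^ n) - eC (β * t ^ n)) := by
    rw [intervalIntegral.integral_sub intervalIntegrable_const
      ((continuous_eC_mul_pow n β).intervalIntegrable _ _), intervalIntegral.integral_const,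
      add_sub_cancel_left, Complex.real_smul]
  rw [as_integral, mul_comm q]
  refine (intervalIntegral.norm_integral_le_of_norm_le_const fun t ht => ?_).trans_eq
    (by rw [add_sub_cancel_left, abs_of_nonneg hq])
  rw [Set.uIoc_of_le (by linarith)] at ht
  have power_sub : |x ^ n - t ^ n| ≤ q * n * T ^ (n - 1) := by
    refine (abs_pow_sub_pow_le x t n).trans ?_
    rw [abs_of_nonneg (hu.trans hux), abs_of_pos (hu.trans_lt ht.1)]
    have dist_le : |x - t| ≤ q := abs_le.2 ⟨by linarith [ht.2], by linarith [ht.1]⟩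
    have max_le_T : max x t ≤ T := max_le (by linarith) (by linarith [ht.2])
    have : 0 ≤ max x t := (hu.trans hux).trans (le_max_left x t)
    gcongr
  calc ‖eC (β * x ^ n) - eC (β * t ^ n)‖ ≤ 2 * Real.pi * (|β| * |x ^ n - t ^ n|) := by
        rw [← abs_mul, mul_sub]
        exact norm_eC_sub_eC_le _ _
    _ ≤ 2 * Real.pi * (|β| * (q * n * T ^ (n - 1))) := by gcongr
    _ = _ := by ring

lemma norm_sum_den_sub_completeSum_mul_integral_le (r : ℚ) (β : ℝ) (u : ℕ) {T : ℝ}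
    (hT : (u : ℝ) + r.den ≤ T) :
    ‖∑ i ∈ Finset.range r.den, eC ((r + β) * ((u + i : ℕ) : ℝ) ^ n) -
        completeSum n r * ∫ t in (u : ℝ)..u + r.den, eC (β * t ^ n)‖ ≤
      r.den * (2 * Real.pi * n * |β| * r.den * T ^ (n - 1)) := by
  have hq : (0 : ℝ) < r.den := mod_cast r.pos
  have hq' : (r.den : ℂ) ≠ 0 := mod_cast r.den_ne_zero
  set I := ∫ t in (u : ℝ)..u + r.den, eC (β * t ^ n)
  set E := 2 * Real.pi * n * |β| * r.den * T ^ (n - 1)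
  have shifted_sum : ∑ i ∈ Finset.range r.den, eC (r * ((u + i : ℕ) : ℝ) ^ n) =
      r.den * completeSum n r := by
    rw [← sum_range_eC_mul_pow n dvd_rfl,
      ← sum_range_add_of_periodic (periodic_eC_mul_pow n dvd_rfl) u]
    simp_rw [add_comm u]
  have split : ∑ i ∈ Finset.range r.den, eC ((r + β) * ((u + i : ℕ) : ℝ) ^ n) -
        completeSum n r * I =
      ∑ i ∈ Finset.range r.den, eC (r * ((u + i : ℕ) : ℝ) ^ n) *
        ((r.den * eC (β * ((u + i : ℕ) : ℝ) ^ n) - I) / r.den) := by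
    rw [show completeSum n r * I = (r.den * completeSum n r) * (I / r.den) by field_simp,
      ← shifted_sum, Finset.sum_mul, ← Finset.sum_sub_distrib]
    refine Finset.sum_congr rfl fun i _ => ?_
    rw [add_mul, eC_add]
    field_simp
  rw [split]
  refine (norm_sum_le_of_le _ (n := fun _ => E) fun i hi => ?_).trans_eq
    (by simp)
  have hi' : (i : ℝ) ≤ r.den := mod_cast (Finset.mem_range.1 hi).le
  rw [norm_mul, norm_eC, one_mul, norm_div, Complex.norm_natCast, div_le_iff₀' hq]
  rw [← Complex.ofReal_natCast r.den]
  exact norm_mul_eC_sub_integral_le n β u.cast_nonneg hT ⟨by simp, by push_cast; linarith⟩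

lemma norm_sum_mul_den_sub_completeSum_mul_integral_le (r : ℚ) (β : ℝ) (u K : ℕ) {T : ℝ}
    (hT : (u : ℝ) + K * r.den ≤ T) :
    ‖∑ i ∈ Finset.range (K * r.den), eC ((r + β) * ((u + i : ℕ) : ℝ) ^ n) -
        completeSum n r * ∫ t in (u : ℝ)..u + K * r.den, eC (β * t ^ n)‖ ≤
      K * (r.den * (2 * Real.pi * n * |β| * r.den * T ^ (n - 1))) := by
  induction K with
  | zero => simp
  | succ K ih =>
    push_cast at hT
    have last_block := norm_sum_den_sub_completeSum_mul_integral_le n r β (u + K * r.den) (T := T)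
      (by push_cast; linarith)
    have previous := ih (by nlinarith [(Nat.cast_nonneg r.den : (0 : ℝ) ≤ _)])
    have integral_split := intervalIntegral.integral_add_adjacent_intervals (a := (u : ℝ))
      (b := u + K * r.den) (c := u + K * r.den + r.den) (μ := volume)
      ((continuous_eC_mul_pow n β).intervalIntegrable _ _)
      ((continuous_eC_mul_pow n β).intervalIntegrable _ _)
    have endpoint : (u : ℝ) + (K + 1 : ℕ) * r.den = u + K * r.den + r.den := by push_cast; ring
    rw [endpoint, ← integral_split, mul_add, add_one_mul, Finset.sum_range_add, add_sub_add_comm]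
    push_cast at previous last_block ⊢
    simp_rw [← add_assoc]
    rw [add_one_mul]
    exact (norm_add_le _ _).trans (add_le_add previous last_block)

lemma exists_norm_sum_range_eC_le (r : ℚ) (β : ℝ) (u L : ℕ) {T : ℝ} (hT : (u : ℝ) + L ≤ T) :
    ∃ K : ℕ, (K : ℝ) * r.den ≤ L ∧
      ‖∑ i ∈ Finset.range L, eC ((r + β) * ((u + i : ℕ) : ℝ) ^ n)‖ ≤
        ‖completeSum n r‖ * ‖∫ t in (u : ℝ)..u + K * r.den, eC (β * t ^ n)‖ +
          (L * (2 * Real.pi * n * |β| * r.den * T ^ (n - 1)) + r.den) := by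
  have hT₀ : 0 ≤ T := le_trans (by positivity) hT
  set K := L / r.den
  have hK : (K : ℝ) * r.den ≤ L := mod_cast Nat.div_mul_le_self L r.den
  refine ⟨K, hK, ?_⟩
  rw [← Nat.div_add_mod' L r.den, Finset.sum_range_add, ← norm_mul, Nat.div_add_mod']
  have blocks := norm_sum_mul_den_sub_completeSum_mul_integral_le n r β u K (T := T) (by linarith)
  rw [← mul_assoc] at blocks
  have remainder : ‖∑ i ∈ Finset.range (L % r.den),
      eC ((r + β) * ((u + (K * r.den + i) : ℕ) : ℝ) ^ n)‖ ≤ r.den := by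
    refine (norm_sum_le_of_le _ fun i _ => (norm_eC _).le).trans ?_
    simpa using mod_cast (Nat.mod_lt L r.pos).le
  refine (norm_add_le _ _).trans ?_
  rw [← add_assoc]
  refine add_le_add ?_ remainder
  refine (norm_le_norm_add_norm_sub' _ _).trans (add_le_add_right (blocks.trans ?_) _)
  gcongr

end Approximation

section OscillatoryIntegral

lemma norm_integral_mul_deriv_le {a b : ℝ} (hab : a ≤ b) {u u' : ℝ → ℝ} {v v' : ℝ → ℂ}
    (hu : ∀ t ∈ Set.Icc a b, HasDerivAt u (u' t) t)
    (hv : ∀ t ∈ Set.Icc a b, HasDerivAt v (v' t) t)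
    (hu' : IntervalIntegrable u' volume a b) (hv' : IntervalIntegrable v' volume a b)
    (hu'_nonpos : ∀ t ∈ Set.Icc a b, u' t ≤ 0) (hub : 0 ≤ u b) (hv_le : ∀ t, ‖v t‖ ≤ 1) :
    ‖∫ t in a..b, u t * v' t‖ ≤ 2 * u a := by
  rw [← Set.uIcc_of_le hab] at hu hv
  have variation : ∫ t in a..b, -u' t = u a - u b := by
    rw [intervalIntegral.integral_neg, intervalIntegral.integral_eq_sub_of_hasDerivAt hu hu',
      neg_sub]
  have hua : u b ≤ u a := by
    rw [← sub_nonneg, ← variation]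
    exact intervalIntegral.integral_nonneg hab fun t ht => neg_nonneg.2 (hu'_nonpos t ht)
  have boundary (t : ℝ) (ht : 0 ≤ u t) : ‖u t * v t‖ ≤ u t := by
    rw [norm_mul, Complex.norm_real, Real.norm_of_nonneg ht]
    exact mul_le_of_le_one_right ht (hv_le t)
  have inner : ‖∫ t in a..b, u' t * v t‖ ≤ u a - u b := by
    rw [← variation]
    refine intervalIntegral.norm_integral_le_of_norm_le hab (.of_forall fun t ht => ?_) hu'.neg
    have ht' := hu'_nonpos t (Set.Ioc_subset_Icc_self ht)
    rw [norm_mul, Complex.norm_real, Real.norm_of_nonpos ht']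
    exact mul_le_of_le_one_right (neg_nonneg.2 ht') (hv_le t)
  rw [intervalIntegral.integral_mul_deriv_eq_deriv_mul (fun t ht => (hu t ht).ofReal_comp) hv
    ⟨hu'.1.ofReal, hu'.2.ofReal⟩ hv']
  have := norm_sub_le (u b * v b - u a * v a) (∫ t in a..b, u' t * v t)
  have := norm_sub_le (u b * v b) (u a * v a)
  linarith [boundary b hub, boundary a (hub.trans hua)]

lemma hasDerivAt_eC_mul_pow_succ (n : ℕ) (β t : ℝ) :
    HasDerivAt (fun t : ℝ => eC (β * t ^ (n + 1)))
      (2 * Real.pi * Complex.I * β * (n + 1) * t ^ n * eC (β * t ^ (n + 1))) t := by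
  have phase := (((hasDerivAt_pow (n + 1) t).const_mul β).ofReal_comp).const_mul
    (2 * Real.pi * Complex.I)
  refine phase.cexp.congr_deriv ?_
  rw [eC, Nat.add_sub_cancel]
  push_cast
  ring

/- Integration by parts: `e(βtⁿ⁺¹)` is `(2πi(n+1)β tⁿ)⁻¹` times its own derivative. The bound is
stated without division so that it also covers `β = 0`. -/
lemma mul_norm_integral_eC_mul_pow_le (n : ℕ) (β : ℝ) {a b : ℝ} (ha : 0 < a) (hab : a ≤ b) :
    |β| * a ^ n * ‖∫ t in a..b, eC (β * t ^ (n + 1))‖ ≤ 1 := by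
  have pos {t : ℝ} (ht : t ∈ Set.Icc a b) : 0 < t := ha.trans_le ht.1
  set k : ℂ := 2 * Real.pi * Complex.I * β * (n + 1) with hk
  have le_norm_k : 2 * |β| ≤ ‖k‖ := by
    have norm_succ : ‖(n + 1 : ℂ)‖ = n + 1 := by exact_mod_cast Complex.norm_natCast (n + 1)
    have norm_k : ‖k‖ = 2 * |β| * (Real.pi * (n + 1)) := by
      simp only [hk, norm_mul, norm_succ, Complex.norm_ofNat, Complex.norm_real, Complex.norm_I,
        Real.norm_eq_abs, abs_of_pos Real.pi_pos]
      ring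
    rw [norm_k]
    exact le_mul_of_one_le_right (by positivity)
      (one_le_mul_of_one_le_of_one_le (by linarith [Real.pi_gt_three]) (by simp))
  have by_parts : ‖∫ t in a..b, (((t ^ n)⁻¹ : ℝ) : ℂ) * (k * t ^ n * eC (β * t ^ (n + 1)))‖ ≤
      2 * (a ^ n)⁻¹ := by
    have := continuous_eC_mul_pow (n + 1) β
    exact norm_integral_mul_deriv_le hab
      (fun t ht => (hasDerivAt_pow n t).fun_inv (pow_pos (pos ht) n).ne')
      (fun t _ => hasDerivAt_eC_mul_pow_succ n β t)
      (ContinuousOn.intervalIntegrable_of_Icc hab (ContinuousOn.div (by fun_prop) (by fun_prop)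
        fun t ht => (pow_pos (pow_pos (pos ht) n) 2).ne'))
      (Continuous.intervalIntegrable (by fun_prop) _ _)
      (fun t ht => div_nonpos_of_nonpos_of_nonneg
        (neg_nonpos.2 (mul_nonneg n.cast_nonneg (pow_nonneg (pos ht).le _))) (sq_nonneg _))
      (inv_nonneg.2 (pow_nonneg (ha.le.trans hab) n)) fun t => (norm_eC _).le
  have cancel : ∫ t in a..b, (((t ^ n)⁻¹ : ℝ) : ℂ) * (k * t ^ n * eC (β * t ^ (n + 1))) =
      k * ∫ t in a..b, eC (β * t ^ (n + 1)) := by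
    rw [← intervalIntegral.integral_const_mul]
    refine intervalIntegral.integral_congr fun t ht => ?_
    rw [Set.uIcc_of_le hab] at ht
    have : (t : ℂ) ≠ 0 := mod_cast (pos ht).ne'
    push_cast
    field_simp
  rw [cancel, norm_mul, ← div_eq_mul_inv, le_div_iff₀ (pow_pos ha n)] at by_parts
  nlinarith [mul_le_mul_of_nonneg_right le_norm_k
    (by positivity : 0 ≤ ‖∫ t in a..b, eC (β * t ^ (n + 1))‖ * a ^ n)]

end OscillatoryIntegral

section MajorArcBound

/-- A majorant, up to a constant, for `|v(β)|²`, where `v(β) = ∫ e(βt⁴) dt` over a subinterval of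
`[δP, P]` is the archimedean factor of `fW δ P` near a rational number. -/
noncomputable def arcKernel (P β : ℝ) : ℝ := P ^ 2 * (1 + (P ^ 4 * β) ^ 2)⁻¹

lemma arcKernel_nonneg (P β : ℝ) : 0 ≤ arcKernel P β := by
  unfold arcKernel
  positivity

lemma norm_integral_eC_mul_pow_four_sq_le {δ P β a b : ℝ} (hδ : 0 < δ) (hP : 0 < P)
    (ha : δ * P ≤ a) (hab : a ≤ b) (hb : b - a ≤ P) :
    ‖∫ t in a..b, eC (β * t ^ 4)‖ ^ 2 ≤ (1 + (δ ^ 6)⁻¹) * arcKernel P β := by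
  have ha₀ : 0 < a := (mul_pos hδ hP).trans_le ha
  set v := ‖∫ t in a..b, eC (β * t ^ 4)‖
  have trivial_bound : v ≤ P := (norm_integral_eC_mul_pow_le 4 β hab).trans hb
  have decay : P ^ 4 * |β| * v ≤ P / δ ^ 3 := by
    rw [le_div_iff₀ (by positivity)]
    calc P ^ 4 * |β| * v * δ ^ 3 = P * (|β| * (δ * P) ^ 3 * v) := by ring
      _ ≤ P * (|β| * a ^ 3 * v) := by gcongr
      _ ≤ P := mul_le_of_le_one_right hP.le (mul_norm_integral_eC_mul_pow_le 3 β ha₀ hab)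
  rw [arcKernel, ← mul_assoc, ← div_eq_mul_inv, le_div_iff₀ (by positivity)]
  calc v ^ 2 * (1 + (P ^ 4 * β) ^ 2) = v ^ 2 + (P ^ 4 * |β| * v) ^ 2 := by
        rw [mul_pow, mul_pow, mul_pow, sq_abs]
        ring
    _ ≤ P ^ 2 + (P / δ ^ 3) ^ 2 := by gcongr
    _ = _ := by
        field_simp

lemma sum_Icc_floor_eq_sum_Ioc {M : Type*} [AddCommMonoid M] {a b : ℝ} (ha : 0 ≤ a) (hb : 0 ≤ b)
    (F : ℤ → M) : ∑ x ∈ Finset.Icc (⌊a⌋ + 1) ⌊b⌋, F x = ∑ x ∈ Finset.Ioc ⌊a⌋₊ ⌊b⌋₊, F x := by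
  have floor_a := Int.natCast_floor_eq_floor ha
  have floor_b := Int.natCast_floor_eq_floor hb
  refine (Finset.sum_nbij' (fun x : ℕ => (x : ℤ)) Int.toNat ?_ ?_ ?_ ?_ ?_).symm <;>
    simp only [Finset.mem_Icc, Finset.mem_Ioc] <;> grind

lemma fW_eq_sum_range {δ P : ℝ} (hδ : 0 ≤ δ) (hP : 0 ≤ P) (α : ℝ) :
    fW δ P α =
      ∑ i ∈ Finset.range (⌊P⌋₊ - ⌊δ * P⌋₊), eC (α * ((⌊δ * P⌋₊ + 1 + i : ℕ) : ℝ) ^ 4) := by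
  rw [fW, sum_Icc_floor_eq_sum_Ioc (mul_nonneg hδ hP) hP, ← Finset.Ico_add_one_add_one_eq_Ioc,
    Finset.sum_Ico_eq_sum_range, Nat.add_sub_add_right]
  rfl

lemma exists_norm_fW_le {δ P : ℝ} (hδ : δ ∈ Set.Ioo 0 1) (hP : 1 ≤ P) {r : ℚ} {β : ℝ}
    (hr : (r.den : ℝ) ≤ P ^ (1 / 2 : ℝ)) (hβ : r.den * |β| ≤ P ^ (-7 / 2 : ℝ)) :
    ∃ a b : ℝ, δ * P ≤ a ∧ a ≤ b ∧ b - a ≤ P ∧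
      ‖fW δ P (r + β)‖ ≤
        ‖completeSum 4 r‖ * ‖∫ t in a..b, eC (β * t ^ 4)‖ + 257 * P ^ (1 / 2 : ℝ) := by
  have hP₀ : 0 < P := by linarith
  set u := ⌊δ * P⌋₊ + 1
  set L := ⌊P⌋₊ - ⌊δ * P⌋₊
  have hL : (L : ℝ) ≤ P :=
    (Nat.cast_le.2 (Nat.sub_le _ _)).trans (Nat.floor_le hP₀.le)
  have endpoint : (u : ℝ) + L ≤ 2 * P := by
    have : ⌊δ * P⌋₊ ≤ ⌊P⌋₊ := Nat.floor_mono (mul_le_of_le_one_left hP₀.le hδ.2.le)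
    have : (u : ℝ) + L = ⌊P⌋₊ + 1 := by exact_mod_cast (by omega : u + L = ⌊P⌋₊ + 1)
    linarith [Nat.floor_le hP₀.le]
  obtain ⟨K, hK, bound⟩ := exists_norm_sum_range_eC_le 4 r β u L endpoint
  refine ⟨u, u + K * r.den, (by simpa [u] using (Nat.lt_floor_add_one (δ * P)).le),
    le_add_of_nonneg_right (by positivity), by linarith, ?_⟩
  rw [fW_eq_sum_range hδ.1.le hP₀.le]
  refine bound.trans (add_le_add_right ?_ _)
  have block_error : L * (2 * Real.pi * 4 * |β| * r.den * (2 * P) ^ 3) ≤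
      256 * P ^ (1 / 2 : ℝ) := by
    calc _ = 64 * Real.pi * L * (r.den * |β|) * P ^ 3 := by ring
      _ ≤ 64 * 4 * P * P ^ (-7 / 2 : ℝ) * P ^ 3 := by
          gcongr
          exact Real.pi_le_four
      _ = 256 * (P ^ (-7 / 2 : ℝ) * P ^ 4) := by ring
      _ = 256 * P ^ (1 / 2 : ℝ) := by
          rw [← Real.rpow_natCast P 4, ← Real.rpow_add hP₀]
          norm_num
  push_cast
  norm_num at block_error ⊢
  linarith

lemma exists_norm_fW_sq_le {δ : ℝ} (hδ : δ ∈ Set.Ioo 0 1) :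
    ∃ C > 0, ∀ {P : ℝ} {r : ℚ} {β : ℝ}, 1 ≤ P → (r.den : ℝ) ≤ P ^ (1 / 2 : ℝ) →
      r.den * |β| ≤ P ^ (-7 / 2 : ℝ) →
      ‖fW δ P (r + β)‖ ^ 2 ≤ C * (‖completeSum 4 r‖ ^ 2 * arcKernel P β + P) := by
  have hδ₀ := hδ.1
  refine ⟨2 * (1 + (δ ^ 6)⁻¹) + 2 * 257 ^ 2, by positivity, fun {P r β} hP hr hβ => ?_⟩
  have hP₀ : 0 < P := by linarith
  obtain ⟨a, b, ha, hab, hb, bound⟩ := exists_norm_fW_le hδ hP hr hβ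
  have sqrt_sq : (P ^ (1 / 2 : ℝ)) ^ 2 = P := by
    rw [← Real.sqrt_eq_rpow, Real.sq_sqrt hP₀.le]
  have kernel_nonneg := arcKernel_nonneg P β
  have : 0 ≤ (δ ^ 6)⁻¹ := by positivity
  calc ‖fW δ P (r + β)‖ ^ 2
      ≤ (‖completeSum 4 r‖ * ‖∫ t in a..b, eC (β * t ^ 4)‖ + 257 * P ^ (1 / 2 : ℝ)) ^ 2 := by
        gcongr
    _ ≤ 2 * ((‖completeSum 4 r‖ * ‖∫ t in a..b, eC (β * t ^ 4)‖) ^ 2 +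
          (257 * P ^ (1 / 2 : ℝ)) ^ 2) := add_sq_le
    _ = 2 * (‖completeSum 4 r‖ ^ 2 * ‖∫ t in a..b, eC (β * t ^ 4)‖ ^ 2) + 2 * 257 ^ 2 * P := by
        rw [mul_pow, mul_pow 257, sqrt_sq]
        ring
    _ ≤ 2 * (‖completeSum 4 r‖ ^ 2 * ((1 + (δ ^ 6)⁻¹) * arcKernel P β)) + 2 * 257 ^ 2 * P := by
        gcongr
        exact norm_integral_eC_mul_pow_four_sq_le hδ₀ hP₀ ha hab hb
    _ ≤ _ := by
        have : 0 ≤ ‖completeSum 4 r‖ ^ 2 * arcKernel P β := by positivity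
        nlinarith [mul_nonneg ‹0 ≤ (δ ^ 6)⁻¹› hP₀.le]

end MajorArcBound

/-! ### Integration over the major arcs -/

/-- The Farey fractions of order `Q` in `[0, 1]`, the centres of the major arcs. -/
noncomputable def fareyFinset (Q : ℕ) : Finset ℚ :=
  (Finset.Icc 1 Q).biUnion fun q => (Finset.range (q + 1)).image fun a : ℕ => (a : ℚ) / q

section Farey

variable {Q : ℕ} {r : ℚ}

lemma natCast_div_mem_fareyFinset {a q : ℕ} (hq : q ∈ Finset.Icc 1 Q) (haq : a ≤ q) :
    (a : ℚ) / q ∈ fareyFinset Q :=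
  Finset.mem_biUnion.2 ⟨q, hq, Finset.mem_image_of_mem _ (Finset.mem_range_succ_iff.2 haq)⟩

lemma mem_Icc_of_mem_fareyFinset (hr : r ∈ fareyFinset Q) : r ∈ Set.Icc 0 1 := by
  obtain ⟨q, -, hr⟩ := Finset.mem_biUnion.1 hr
  obtain ⟨a, ha, rfl⟩ := Finset.mem_image.1 hr
  exact ⟨by positivity, div_le_one_of_le₀ (mod_cast Finset.mem_range_succ_iff.1 ha) q.cast_nonneg⟩

lemma den_le_of_mem_fareyFinset (hr : r ∈ fareyFinset Q) : r.den ≤ Q := by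
  obtain ⟨q, hq, hr⟩ := Finset.mem_biUnion.1 hr
  obtain ⟨a, -, rfl⟩ := Finset.mem_image.1 hr
  obtain ⟨hq₀, hqQ⟩ := Finset.mem_Icc.1 hq
  exact (Nat.le_of_dvd hq₀ (den_natCast_div_dvd a q)).trans hqQ

lemma sum_fareyFinset_inv_den_le (Q : ℕ) : ∑ r ∈ fareyFinset Q, (r.den : ℝ)⁻¹ ≤ 2 * Q := by
  have den_mem (r : ℚ) (hr : r ∈ fareyFinset Q) : r.den ∈ Finset.Icc 1 Q :=
    Finset.mem_Icc.2 ⟨r.pos, den_le_of_mem_fareyFinset hr⟩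
  refine (sum_comp_den_le (fun r hr => mem_Icc_of_mem_fareyFinset hr) den_mem
    (F := fun d => (d : ℝ)⁻¹) fun d => by positivity).trans ?_
  gcongr
  refine (Finset.sum_le_card_nsmul _ _ 1 fun d _ => mul_inv_le_one).trans ?_
  simp

lemma majM_subset_biUnion_closedBall (P : ℝ) :
    MajM P ⊆ ⋃ r ∈ fareyFinset ⌊P ^ (1 / 2 : ℝ)⌋₊,
      Metric.closedBall (r : ℝ) (P ^ (-7 / 2 : ℝ) / r.den) := by
  rintro α ⟨_, a, q, haq, hqP, coprime, arc⟩
  have hq : 0 < q := by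
    rcases q.eq_zero_or_pos with rfl | hq
    · simp [Nat.le_zero.1 haq] at coprime
    · exact hq
  have hq' : (0 : ℝ) < q := mod_cast hq
  have den_eq : ((a : ℚ) / q).den = q := by
    have := Rat.den_div_eq_of_coprime (a := a) (b := q) (mod_cast hq) (by simpa)
    push_cast at this
    exact_mod_cast this
  refine Set.mem_iUnion₂.2
    ⟨a / q, natCast_div_mem_fareyFinset (Finset.mem_Icc.2 ⟨hq, Nat.le_floor hqP⟩) haq, ?_⟩
  have rescaled : (q : ℝ) * |α - a / q| = |q * α - a| := by
    rw [← abs_of_pos hq', ← abs_mul, abs_of_pos hq', mul_sub, mul_div_cancel₀ _ hq'.ne']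
  rw [Metric.mem_closedBall, Real.dist_eq, den_eq, le_div_iff₀' hq']
  push_cast
  exact rescaled.trans_le arc

end Farey

lemma setIntegral_le_sum_of_subset_biUnion {α ι : Type*} [MeasurableSpace α] {μ : Measure α}
    {f : α → ℝ} {M : Set α} {s : Finset ι} {I : ι → Set α} (hM : M ⊆ ⋃ i ∈ s, I i) (hf : 0 ≤ f)
    (hfI : ∀ i ∈ s, IntegrableOn f (I i) μ) :
    ∫ x in M, f x ∂μ ≤ ∑ i ∈ s, ∫ x in I i, f x ∂μ := by
  have restrict_le : μ.restrict M ≤ ∑ i ∈ s, μ.restrict (I i) := by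
    refine (Measure.restrict_mono_set μ hM).trans (Measure.le_iff.2 fun t ht => ?_)
    simp only [Measure.restrict_apply ht, Measure.coe_finsetSum, Finset.sum_apply,
      Set.inter_iUnion₂]
    exact measure_biUnion_finset_le s fun i => t ∩ I i
  rw [← integral_finsetSum_measure hfI]
  exact integral_mono_measure restrict_le (.of_forall hf) (integrable_finsetSum_measure.2 hfI)

lemma integrable_arcKernel {P : ℝ} (hP : P ≠ 0) : Integrable (arcKernel P) :=
  (integrable_inv_one_add_sq.comp_mul_left' (pow_ne_zero 4 hP)).const_mul (P ^ 2)

lemma integral_arcKernel (P : ℝ) : ∫ β, arcKernel P β = Real.pi / P ^ 2 := by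
  simp only [arcKernel]
  rw [integral_const_mul, Measure.integral_comp_mul_left (fun x => (1 + x ^ 2)⁻¹),
    integral_univ_inv_one_add_sq, abs_inv, abs_of_nonneg (by positivity), smul_eq_mul]
  rcases eq_or_ne P 0 with rfl | hP
  · simp
  · field_simp

lemma continuous_fW (δ P : ℝ) : Continuous (fW δ P) :=
  continuous_finsetSum _ fun _ _ => continuous_eC.comp (by fun_prop)

lemma continuous_weightedWeylSum (n N : ℕ) (c : ℕ → ℂ) : Continuous (weightedWeylSum n N c) :=
  continuous_finsetSum _ fun _ _ => continuous_const.mul (continuous_eC.comp (by fun_prop))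

lemma weightedWeylSum_add (n N : ℕ) (c : ℕ → ℂ) (α β : ℝ) :
    weightedWeylSum n N c (α + β) =
      weightedWeylSum n N (fun x => c x * eC (β * (x : ℝ) ^ n)) α :=
  Finset.sum_congr rfl fun x _ => by rw [add_mul, eC_add, mul_assoc, mul_comm (eC (α * _))]

/-- The main term, as a function of `β`, of `‖fW δ P (r + β)‖² ‖G(r + β)‖⁶` near the rational
number `r`, where `G` is the quartic Weyl sum of length `P` with coefficients `c`. -/
noncomputable def arcMainTerm (P : ℝ) (c : ℕ → ℂ) (r : ℚ) (β : ℝ) : ℝ :=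
  arcKernel P β * (‖completeSum 4 r‖ ^ 2 * ‖weightedWeylSum 4 ⌊P⌋₊ c (r + β)‖ ^ 6)

section MainTerm

variable {P : ℝ} {c : ℕ → ℂ} {r : ℚ}

lemma arcMainTerm_nonneg (P : ℝ) (c : ℕ → ℂ) (r : ℚ) (β : ℝ) : 0 ≤ arcMainTerm P c r β :=
  mul_nonneg (arcKernel_nonneg P β) (by positivity)

lemma norm_weightedWeylSum_floor_le (n : ℕ) (hP : 1 ≤ P) (hc : ∀ x, ‖c x‖ ≤ 1) (α : ℝ) :
    ‖weightedWeylSum n ⌊P⌋₊ c α‖ ≤ 2 * P :=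
  (norm_weightedWeylSum_le n (Nat.floor_pos.2 hP) hc α).trans
    (mul_le_mul_of_nonneg_left (Nat.floor_le (by linarith)) zero_le_two)

lemma integrable_arcMainTerm (hP : 1 ≤ P) (hc : ∀ x, ‖c x‖ ≤ 1) (r : ℚ) :
    Integrable (arcMainTerm P c r) := by
  have := continuous_weightedWeylSum 4 ⌊P⌋₊ c
  refine (integrable_arcKernel (by linarith)).mul_bdd (c := ‖completeSum 4 r‖ ^ 2 * (2 * P) ^ 6)
    (Continuous.aestronglyMeasurable (by fun_prop)) (.of_forall fun β => ?_)
  rw [Real.norm_of_nonneg (by positivity)]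
  gcongr
  exact norm_weightedWeylSum_floor_le 4 hP hc _

lemma sum_arcMainTerm_eq (P : ℝ) (c : ℕ → ℂ) (R : Finset ℚ) (β : ℝ) :
    ∑ r ∈ R, arcMainTerm P c r β =
      arcKernel P β *
        completeSumMeanValue 4 ⌊P⌋₊ (fun x => c x * eC (β * (x : ℝ) ^ 4)) R := by
  simp only [arcMainTerm, weightedWeylSum_add, completeSumMeanValue, Finset.mul_sum]

lemma exists_sum_integral_arcMainTerm_le :
    ∃ C > 0, ∀ {P : ℝ} {c : ℕ → ℂ} {R : Finset ℚ}, 1 ≤ P → (∀ x, ‖c x‖ ≤ 1) →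
      (∀ r ∈ R, r.den ^ 2 ≤ ⌊P⌋₊) → (∀ r ∈ R, r ∈ Set.Icc 0 1) →
      ∑ r ∈ R, ∫ β, arcMainTerm P c r β ≤ C * P ^ 4 := by
  obtain ⟨C, hC, mean_value⟩ := exists_completeSumMeanValue_le (n := 4) (by norm_num) le_rfl
  refine ⟨C * Real.pi, by positivity, fun {P c R} hP hc hden hR => ?_⟩
  have hP₀ : 0 < P := by linarith
  have pointwise (β : ℝ) : ∑ r ∈ R, arcMainTerm P c r β ≤ C * P ^ 6 * arcKernel P β := by
    rw [sum_arcMainTerm_eq, mul_comm]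
    refine mul_le_mul_of_nonneg_right ((mean_value hden hR fun x => ?_).trans ?_)
      (arcKernel_nonneg P β)
    · rw [norm_mul, norm_eC, mul_one]
      exact hc x
    · gcongr
      exact Nat.floor_le hP₀.le
  rw [← integral_finsetSum _ fun r _ => integrable_arcMainTerm hP hc r]
  calc _ ≤ ∫ β, C * P ^ 6 * arcKernel P β :=
        integral_mono (integrable_finsetSum _ fun r _ => integrable_arcMainTerm hP hc r)
          ((integrable_arcKernel hP₀.ne').const_mul _) pointwise
    _ = C * Real.pi * P ^ 4 := by
        rw [integral_const_mul, integral_arcKernel]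
        field_simp

lemma exists_norm_fW_sq_mul_le {δ : ℝ} (hδ : δ ∈ Set.Ioo 0 1) :
    ∃ C > 0, ∀ {P : ℝ} {c : ℕ → ℂ} {r : ℚ} {α : ℝ}, 1 ≤ P → (∀ x, ‖c x‖ ≤ 1) →
      (r.den : ℝ) ≤ P ^ (1 / 2 : ℝ) →
      α ∈ Metric.closedBall (r : ℝ) (P ^ (-7 / 2 : ℝ) / r.den) →
      ‖fW δ P α‖ ^ 2 * ‖weightedWeylSum 4 ⌊P⌋₊ c α‖ ^ 6 ≤
        C * arcMainTerm P c r (α - r) + C * (2 ^ 6 * P ^ 7) := by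
  obtain ⟨C, hC, fW_sq_le⟩ := exists_norm_fW_sq_le hδ
  refine ⟨C, hC, fun {P c r α} hP hc hr hα => ?_⟩
  rw [Metric.mem_closedBall, Real.dist_eq, le_div_iff₀' (mod_cast r.pos)] at hα
  have fW_sq := fW_sq_le hP hr hα
  rw [add_sub_cancel] at fW_sq
  rw [arcMainTerm, add_sub_cancel]
  set G := ‖weightedWeylSum 4 ⌊P⌋₊ c α‖
  calc ‖fW δ P α‖ ^ 2 * G ^ 6
      ≤ C * (‖completeSum 4 r‖ ^ 2 * arcKernel P (α - r) + P) * G ^ 6 := by gcongr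
    _ = C * (arcKernel P (α - r) * (‖completeSum 4 r‖ ^ 2 * G ^ 6)) + C * (P * G ^ 6) := by ring
    _ ≤ C * (arcKernel P (α - r) * (‖completeSum 4 r‖ ^ 2 * G ^ 6)) + C * (P * (2 * P) ^ 6) := by
        gcongr
        exact norm_weightedWeylSum_floor_le 4 hP hc α
    _ = _ := by ring

lemma setIntegral_closedBall_le {F h : ℝ → ℝ} {x w E : ℝ} (hw : 0 ≤ w)
    (hF : IntegrableOn F (Metric.closedBall x w)) (hh : Integrable h) (hh₀ : 0 ≤ h)
    (hFh : ∀ α ∈ Metric.closedBall x w, F α ≤ h (α - x) + E) :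
    ∫ α in Metric.closedBall x w, F α ≤ (∫ β, h β) + 2 * w * E := by
  have shifted : Integrable fun α => h (α - x) := hh.comp_sub_right x
  have const : IntegrableOn (fun _ => E) (Metric.closedBall x w) :=
    integrableOn_const measure_closedBall_lt_top.ne
  calc _ ≤ ∫ α in Metric.closedBall x w, (h (α - x) + E) :=
        setIntegral_mono_on hF (shifted.integrableOn.add const) measurableSet_closedBall hFh
    _ = (∫ α in Metric.closedBall x w, h (α - x)) + 2 * w * E := by
        rw [integral_add shifted.integrableOn const, setIntegral_const,
          Real.volume_real_closedBall hw, smul_eq_mul]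
    _ ≤ (∫ α, h (α - x)) + 2 * w * E :=
        add_le_add (setIntegral_le_integral shifted (.of_forall fun α => hh₀ (α - x))) le_rfl
    _ = _ := by rw [integral_sub_right_eq_self h]

lemma exists_setIntegral_closedBall_le {δ : ℝ} (hδ : δ ∈ Set.Ioo 0 1) :
    ∃ C > 0, ∀ {P : ℝ} {c : ℕ → ℂ} {r : ℚ}, 1 ≤ P → (∀ x, ‖c x‖ ≤ 1) →
      (r.den : ℝ) ≤ P ^ (1 / 2 : ℝ) →
      ∫ α in Metric.closedBall (r : ℝ) (P ^ (-7 / 2 : ℝ) / r.den),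
          ‖fW δ P α‖ ^ 2 * ‖weightedWeylSum 4 ⌊P⌋₊ c α‖ ^ 6 ≤
        C * ((∫ β, arcMainTerm P c r β) + 2 ^ 7 * P ^ (7 / 2 : ℝ) * (r.den : ℝ)⁻¹) := by
  obtain ⟨C, hC, pointwise⟩ := exists_norm_fW_sq_mul_le hδ
  refine ⟨C, hC, fun {P c r} hP hc hr => ?_⟩
  have hP₀ : 0 < P := by linarith
  have := continuous_fW δ P
  have := continuous_weightedWeylSum 4 ⌊P⌋₊ c
  have power_mul : P ^ (-7 / 2 : ℝ) * P ^ 7 = P ^ (7 / 2 : ℝ) := by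
    rw [← Real.rpow_natCast, ← Real.rpow_add hP₀]
    norm_num
  refine (setIntegral_closedBall_le (by positivity)
    (Continuous.continuousOn (by fun_prop) |>.integrableOn_compact (isCompact_closedBall _ _))
    ((integrable_arcMainTerm hP hc r).const_mul C)
    (fun β => mul_nonneg hC.le (arcMainTerm_nonneg P c r β))
    fun α hα => pointwise hP hc hr hα).trans_eq ?_
  rw [integral_const_mul, ← power_mul]
  ring

end MainTerm

lemma exists_gW_eq_weightedWeylSum {δ P : ℝ} (hδ : 0 ≤ δ) (hP : 0 ≤ P) (R : ℝ) :
    ∃ c : ℕ → ℂ, (∀ x, ‖c x‖ ≤ 1) ∧ ∀ α, gW δ P R α = weightedWeylSum 4 ⌊P⌋₊ c α := by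
  refine ⟨Set.indicator {x : ℕ | ⌊δ * P⌋₊ < x ∧ IsSmooth R x} 1,
    fun x => (norm_indicator_le_norm_self _ _).trans (by simp), fun α => ?_⟩
  rw [gW, sum_Icc_floor_eq_sum_Ioc (mul_nonneg hδ hP) hP, weightedWeylSum]
  have Ioc_subset : Finset.Ioc ⌊δ * P⌋₊ ⌊P⌋₊ ⊆ Finset.range (⌊P⌋₊ + 1) := fun x hx =>
    Finset.mem_range_succ_iff.2 (Finset.mem_Ioc.1 hx).2
  refine (Finset.sum_congr rfl fun x hx => ?_).trans
    (Finset.sum_subset Ioc_subset fun x hx hx' => ?_)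
  · simp [Set.indicator_apply, (Finset.mem_Ioc.1 hx).1]
  · rw [Set.indicator_of_notMem, zero_mul]
    exact fun h => hx' (Finset.mem_Ioc.2 ⟨h.1, Finset.mem_range_succ_iff.1 hx⟩)

theorem stmt17_general {δ : ℝ} (hδ : δ ∈ Set.Ioo (0 : ℝ) 1) :
    ∃ C > (0 : ℝ), ∀ P : ℝ, 1 ≤ P → ∀ c : ℕ → ℂ, (∀ x, ‖c x‖ ≤ 1) →
      (∫ α in MajM P, ‖fW δ P α‖ ^ 2 * ‖weightedWeylSum 4 ⌊P⌋₊ c α‖ ^ 6) ≤ C * P ^ 4 := by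
  obtain ⟨C₁, hC₁, arc⟩ := exists_setIntegral_closedBall_le hδ
  obtain ⟨C₂, hC₂, main_terms⟩ := exists_sum_integral_arcMainTerm_le
  refine ⟨C₁ * (C₂ + 2 ^ 8), by positivity, fun P hP c hc => ?_⟩
  have hP₀ : 0 < P := by linarith
  set Q := ⌊P ^ (1 / 2 : ℝ)⌋₊
  have Q_le : (Q : ℝ) ≤ P ^ (1 / 2 : ℝ) := Nat.floor_le (by positivity)
  have Q_sq_le : Q ^ 2 ≤ ⌊P⌋₊ := by
    refine Nat.le_floor ?_
    rw [← Real.sqrt_eq_rpow, Real.le_sqrt (Nat.cast_nonneg Q) hP₀.le] at Q_le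
    exact_mod_cast Q_le
  have den_sq_le (r : ℚ) (hr : r ∈ fareyFinset Q) : r.den ^ 2 ≤ ⌊P⌋₊ :=
    (Nat.pow_le_pow_left (den_le_of_mem_fareyFinset hr) 2).trans Q_sq_le
  have power_mul : P ^ (7 / 2 : ℝ) * P ^ (1 / 2 : ℝ) = P ^ 4 := by
    rw [← Real.rpow_add hP₀, ← Real.rpow_natCast]
    norm_num
  have := continuous_fW δ P
  have := continuous_weightedWeylSum 4 ⌊P⌋₊ c
  calc _ ≤ ∑ r ∈ fareyFinset Q, ∫ α in Metric.closedBall (r : ℝ) (P ^ (-7 / 2 : ℝ) / r.den),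
          ‖fW δ P α‖ ^ 2 * ‖weightedWeylSum 4 ⌊P⌋₊ c α‖ ^ 6 :=
        setIntegral_le_sum_of_subset_biUnion (majM_subset_biUnion_closedBall P)
          (fun α => by positivity) fun r _ =>
            (Continuous.continuousOn (by fun_prop)).integrableOn_compact (isCompact_closedBall _ _)
    _ ≤ ∑ r ∈ fareyFinset Q, C₁ * ((∫ β, arcMainTerm P c r β) +
          2 ^ 7 * P ^ (7 / 2 : ℝ) * (r.den : ℝ)⁻¹) :=
        Finset.sum_le_sum fun r hr =>
          arc hP hc ((Nat.cast_le.2 (den_le_of_mem_fareyFinset hr)).trans Q_le)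
    _ = C₁ * (∑ r ∈ fareyFinset Q, (∫ β, arcMainTerm P c r β) +
          2 ^ 7 * P ^ (7 / 2 : ℝ) * ∑ r ∈ fareyFinset Q, (r.den : ℝ)⁻¹) := by
        rw [← Finset.mul_sum, Finset.sum_add_distrib, ← Finset.mul_sum]
    _ ≤ C₁ * (C₂ * P ^ 4 + 2 ^ 7 * P ^ (7 / 2 : ℝ) * (2 * P ^ (1 / 2 : ℝ))) := by
        gcongr
        · exact main_terms hP hc den_sq_le fun r hr => mem_Icc_of_mem_fareyFinset hr
        · exact (sum_fareyFinset_inv_den_le Q).trans (by gcongr)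
    _ = _ := by
        rw [← power_mul]
        ring

theorem stmt17 (δ : ℝ) (hδ : δ ∈ Set.Ioo (0 : ℝ) 1) :
    ∃ η > (0 : ℝ), ∃ C > (0 : ℝ), ∀ P : ℝ, 2 ≤ P → ∀ R : ℝ, 1 ≤ R → R ≤ P ^ η →
      (∫ α in MajM P, ‖fW δ P α‖ ^ 2 * ‖gW δ P R α‖ ^ 6) ≤ C * P ^ 4 := by
  obtain ⟨C, hC, bound⟩ := stmt17_general hδ
  refine ⟨1, one_pos, C, hC, fun P hP R _ _ => ?_⟩
  obtain ⟨c, hc, gW_eq⟩ := exists_gW_eq_weightedWeylSum hδ.1.le (by linarith : 0 ≤ P) R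
  simpa only [gW_eq] using bound P (by linarith) c hc
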